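/- Let ℋ be a complex Hilbert space, let A ∈ B(ℋ) be normal, and let 1 ≤ r < k with k ≤ dim ℋ. Let 𝒮 be any subset of F_r containing the set 𝒮₀ = {2e^{iξ}‖A‖P : P ∈ P_r, ξ ∈ [0,2π)}. Then Λ_k(A) = ⋂{Λ_{k−r}(A + F) : F ∈ 𝒮}. -/

import Mathlib

noncomputable section

open scoped InnerProductSpace
open Complex

variable {H : Type*} [NormedAddCommGroup H] [InnerProductSpace ℂ H] [CompleteSpace H]

/-- `P` is an orthogonal projection: self-adjoint and idempotent. -/
def IsOrthProj (P : H →L[ℂ] H) : Prop :=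
  IsSelfAdjoint P ∧ P ∘L P = P

/-- The rank of a bounded operator, as a cardinal. -/
def opRank (F : H →L[ℂ] H) : Cardinal :=
  Module.rank ℂ (LinearMap.range (F : H →ₗ[ℂ] H))

/-- The rank-`k` numerical range `Λ_k(A)`. -/
def rankKRange (k : ℕ) (A : H →L[ℂ] H) : Set ℂ :=
  { lam | ∃ P : H →L[ℂ] H, IsOrthProj P ∧ opRank P = k ∧ P ∘L A ∘L P = lam • P }

/-- The classical numerical range `W(A)`. -/
def numRange (A : H →L[ℂ] H) : Set ℂ :=
  { z | ∃ x : H, ‖x‖ = 1 ∧ ⟪x, A x⟫_ℂ = z }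

/-- `λ_k(T)`: the supremum over `k`-dimensional compressions of the `k`-th largest
eigenvalue of the compression (Courant–Fischer form: sup over `k`-dimensional
subspaces of the infimum of the Rayleigh quotient). -/
def lambdaSA (k : ℕ) (T : H →L[ℂ] H) : ℝ :=
  sSup { t : ℝ | ∃ V : Submodule ℂ H, Module.finrank ℂ V = k ∧
    ∀ x ∈ V, ‖x‖ = 1 → t ≤ (⟪x, T x⟫_ℂ).re }

/-- The real part `(T + T*)/2` of an operator. -/
def reOp (T : H →L[ℂ] H) : H →L[ℂ] H :=
  (2 : ℂ)⁻¹ • (T + ContinuousLinearMap.adjoint T)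

/-- The set `Ω_k(A)`. -/
def omegaK (k : ℕ) (A : H →L[ℂ] H) : Set ℂ :=
  { μ | ∀ ξ ∈ Set.Ico (0 : ℝ) (2 * Real.pi),
      (Complex.exp (ξ * Complex.I) * μ).re ≤ lambdaSA k (reOp (Complex.exp (ξ * Complex.I) • A)) }

/-!
A point `λ` lies in `Λ_k(A)` exactly when the form `⟪x, (A - λ) y⟫` vanishes on a `k`-dimensional
subspace. A perturbation of rank at most `r` costs at most `r` of these dimensions, which gives one
inclusion. For the other one put `B = A - λ`; being normal, `B` has a spectral subspace for each
half-plane `0 ≤ Re (d z)`, and there are two cases.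

* Every half-plane has smaller sectors inside it whose spectral subspaces still have dimension at
  least `k`. By compactness of the circle finitely many half-planes suffice, so everything happens
  on a finite-dimensional subspace on which the form is diagonal, with entries `z i` such that every
  closed half-plane through `0` contains at least `k` of them. Such a form has a `k`-dimensional
  isotropic subspace. When the slopes of the entries to the left and to the right of the imaginary
  axis interlace, this is the vanishing of the divided differences of polynomials of low degree; the
  general case splits into interlacing pieces.
* Otherwise some direction `v` and some reducing subspace `M` of dimension less than `k` satisfy
  `Re (v ⟪x, B x⟫) ≤ 0` on `Mᗮ`, and no nonzero `x ∈ Mᗮ` has `⟪x, B x⟫ = 0`. Let `P` be the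
  projection onto an `r`-dimensional subspace contained in `M` or containing it. For a suitable `ξ`,
  adding `2 e^{iξ} ‖A‖ P` pushes the form into the same half-plane on that subspace too, and leaves
  no `(k - r)`-dimensional isotropic subspace.
-/

section AlternatingWeights

open Polynomial Finset

variable {n : ℕ} {s : Fin (n + 1) → ℝ}

lemma neg_one_pow_mul_prod_erase_sub_pos (hs : StrictMono s) (i : Fin (n + 1)) :
    0 < (-1 : ℝ) ^ (n + i : ℕ) * ∏ j ∈ univ.erase i, (s i - s j) := by
  have hsplit : (univ.erase i : Finset (Fin (n + 1))) = Iio i ∪ Ioi i := by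
    ext j
    simp [lt_or_lt_iff_ne]
  have hdisj : Disjoint (Iio i) (Ioi i) :=
    disjoint_left.2 fun j hj hj' => (mem_Iio.1 hj).not_gt (mem_Ioi.1 hj')
  have hflip : ∏ j ∈ Ioi i, (s i - s j) = (-1) ^ (n - i : ℕ) * ∏ j ∈ Ioi i, (s j - s i) := by
    have hcard : n - (i : ℕ) = #(Ioi i) := by simp
    simp only [hcard, ← prod_const, ← prod_mul_distrib, neg_one_mul, neg_sub]
  have hsign : (-1 : ℝ) ^ (n + i : ℕ) * (-1) ^ (n - i : ℕ) = 1 := by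
    rw [← pow_add, show (n + i + (n - i) : ℕ) = 2 * n by omega, pow_mul]
    norm_num
  calc 0 < (∏ j ∈ Iio i, (s i - s j)) * ∏ j ∈ Ioi i, (s j - s i) :=
        mul_pos (prod_pos fun j hj => sub_pos.2 (hs (mem_Iio.1 hj)))
          (prod_pos fun j hj => sub_pos.2 (hs (mem_Ioi.1 hj)))
    _ = _ := by
        rw [hsplit, prod_union hdisj, hflip]
        linear_combination
          (-(∏ j ∈ Iio i, (s i - s j)) * ∏ j ∈ Ioi i, (s j - s i)) * hsign

-- Lagrange interpolation expresses the coefficient of degree `n` through the values at the nodes.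
lemma exists_alternating_weights (hs : StrictMono s) :
    ∃ w : Fin (n + 1) → ℝ, (∀ i, 0 < w i) ∧ ∀ R : ℂ[X], R.degree < n →
      ∑ i : Fin (n + 1), (-1) ^ (i : ℕ) * (w i : ℂ) * R.eval (s i : ℂ) = 0 := by
  refine ⟨fun i => ((-1) ^ (n + i : ℕ) * ∏ j ∈ univ.erase i, (s i - s j))⁻¹,
    fun i => inv_pos.2 (neg_one_pow_mul_prod_erase_sub_pos hs i), fun R hR => ?_⟩
  have hlag := Lagrange.coeff_eq_sum (s := univ) (v := fun i => (s i : ℂ)) (P := R)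
    (ofReal_injective.comp hs.injective).injOn (by simpa using hR.trans (by norm_cast; simp))
  rw [card_univ, Fintype.card_fin, Nat.add_sub_cancel, coeff_eq_zero_of_degree_lt hR] at hlag
  rw [← mul_zero ((-1 : ℂ) ^ n), hlag, mul_sum]
  refine sum_congr rfl fun i _ => ?_
  have hsq : ((-1 : ℂ) ^ (i : ℕ)) ^ 2 = 1 := by rw [← pow_mul, mul_comm, pow_mul]; norm_num
  have hsq' : ((-1 : ℂ) ^ n) ^ 2 = 1 := by rw [← pow_mul, mul_comm, pow_mul]; norm_num
  have hinv : ((-1 : ℂ) ^ (n + i : ℕ))⁻¹ = (-1) ^ n * (-1) ^ (i : ℕ) := by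
    rw [pow_add]
    exact inv_eq_of_mul_eq_one_left (by linear_combination hsq' * ((-1 : ℂ) ^ (i : ℕ)) ^ 2 + hsq)
  push_cast
  rw [mul_inv, hinv]
  linear_combination ((-1 : ℂ) ^ n * R.eval (s i : ℂ) * (∏ j ∈ univ.erase i, ((s i : ℂ) - s j))⁻¹) *
    hsq

end AlternatingWeights

section DiagonalForms

open ComplexConjugate Finset Polynomial Topology

variable {ι κ : Type*} [Fintype ι] [Fintype κ] {z : ι → ℂ} {k l : ℕ}

lemma degree_mul_mul_lt {m : ℕ} {p q₁ q₂ : ℂ[X]} (hp : p.natDegree ≤ 1) (hq₁ : q₁.degree < m)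
    (hq₂ : q₂.degree < m) : (p * q₁ * q₂).degree < (2 * m : ℕ) := by
  rcases eq_or_ne q₁ 0 with rfl | h₁
  · rw [mul_zero, zero_mul, degree_zero]
    exact WithBot.bot_lt_coe _
  rcases eq_or_ne q₂ 0 with rfl | h₂
  · rw [mul_zero, degree_zero]
    exact WithBot.bot_lt_coe _
  have hdeg₁ := (natDegree_lt_iff_degree_lt h₁).2 hq₁
  have hdeg₂ := (natDegree_lt_iff_degree_lt h₂).2 hq₂
  refine degree_le_natDegree.trans_lt (Nat.cast_lt.2 ?_)
  have := natDegree_mul_le (p := p * q₁) (q := q₂)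
  have := natDegree_mul_le (p := p) (q := q₁)
  omega

lemma mul_sq_sqrt_div_of_mul_re_neg {z : ℂ} {w ε : ℝ} (hε : ε = 1 ∨ ε = -1) (hw : 0 < w)
    (hz : ε * z.re < 0) :
    z * (√(w / (-(ε * z.re))) : ℂ) ^ 2 = -(ε * w * (1 + (z.im / z.re : ℝ) * I)) := by
  have hre : z.re ≠ 0 := right_ne_zero_of_mul hz.ne
  have hsq : z.re * √(w / (-(ε * z.re))) ^ 2 = -(ε * w) := by
    rw [Real.sq_sqrt (div_pos hw (neg_pos.2 hz)).le]
    rcases hε with rfl | rfl <;> field_simp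
  set c := √(w / (-(ε * z.re)))
  calc z * (c : ℂ) ^ 2 = (z.re * c ^ 2 : ℝ) * (1 + (z.im / z.re : ℝ) * I) := by
        apply Complex.ext <;> (simp [← ofReal_pow]; try field_simp)
    _ = _ := by rw [hsq]; push_cast; ring

lemma lt_residue_card_iff {p r d t : ℕ} (hd : d < r) :
    t < (p + r - 1 - d) / r ↔ d + r * t < p := by
  rw [Nat.lt_iff_add_one_le, Nat.le_div_iff_mul_le (by omega), add_mul, one_mul, mul_comm t]
  omega

lemma residue_add_mul_inj {r t t' : ℕ} {d d' : Fin r} (h : d + r * t = d' + r * t') :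
    d = d' ∧ t = t' := by
  have hr : 0 < r := d.pos
  have hmod := congrArg (· % r) h
  have hdiv := congrArg (· / r) h
  simp only [Nat.add_mul_mod_self_left, Nat.mod_eq_of_lt, Fin.is_lt] at hmod
  simp only [Nat.add_mul_div_left _ _ hr, Nat.div_eq_of_lt, Fin.is_lt, zero_add] at hdiv
  exact ⟨Fin.ext hmod, hdiv⟩

lemma le_sum_residue_card (p : ℕ) {r : ℕ} (hr : 0 < r) :
    p ≤ ∑ d : Fin r, (p + r - 1 - d) / r := by
  let f : Fin p → Σ d : Fin r, Fin ((p + r - 1 - d) / r) := fun j =>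
    ⟨⟨j % r, Nat.mod_lt _ hr⟩, ⟨j / r, (lt_residue_card_iff (Nat.mod_lt _ hr)).2
      ((Nat.mod_add_div j r).symm ▸ j.2)⟩⟩
  have hf : Function.Injective f := by
    refine Function.LeftInverse.injective (g := fun x => ⟨x.1 + r * x.2,
      (lt_residue_card_iff x.1.2).1 x.2.2⟩) fun j => Fin.ext (Nat.mod_add_div j r)
  simpa using Fintype.card_le_of_injective f hf

lemma card_filter_sum (P : ι ⊕ κ → Prop) [DecidablePred P] :
    #{x | P x} = #{i | P (.inl i)} + #{j | P (.inr j)} := by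
  simp only [card_filter, Fintype.sum_sum_type]

lemma apply_le_apply_of_forall_card_le {m n : ℕ} {f : Fin m → ℝ} {g : Fin n → ℝ} (hf : Monotone f)
    (hg : Monotone g) {i : Fin m} {j : Fin n}
    (h : ∀ t, n + i ≤ #{x | f x ≤ t} + #{y | t ≤ g y} + j) : f i ≤ g j := by
  by_contra! hlt
  obtain ⟨t, hgt, hft⟩ := exists_between hlt
  have hcard_f := mt (Tuple.lt_card_le_iff_apply_le_of_monotone hf).1 hft.not_ge
  have hcard_g := (Tuple.lt_card_lt_iff_apply_lt_of_monotone hg).2 hgt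
  have hcompl := card_filter_add_card_filter_not (s := univ) (fun y => g y < t)
  simp only [not_lt, card_univ, Fintype.card_fin] at hcard_f hcompl
  have := h t
  omega

lemma exists_equiv_fin_monotone {n : ℕ} (hn : Fintype.card ι = n) (f : ι → ℝ) :
    ∃ e : Fin n ≃ ι, Monotone (f ∘ e) :=
  ⟨(Tuple.sort (f ∘ (Fintype.equivFinOfCardEq hn).symm)).trans
    (Fintype.equivFinOfCardEq hn).symm,
    Tuple.monotone_sort (f ∘ (Fintype.equivFinOfCardEq hn).symm)⟩

lemma eventually_re_mul_one_sub_ne_zero {w : ℂ} (hw : w ≠ 0) :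
    ∀ᶠ η : ℝ in 𝓝[>] 0, (w * (1 - η * I)).re ≠ 0 ∧ (0 < (w * (1 - η * I)).re → 0 ≤ w.re) := by
  have hlim : Filter.Tendsto (fun η : ℝ => (w * (1 - η * I)).re) (𝓝[>] 0) (𝓝 w.re) := by
    have hcont : Continuous fun η : ℝ => (w * (1 - η * I)).re := by fun_prop
    simpa using (hcont.tendsto 0).mono_left nhdsWithin_le_nhds
  rcases lt_trichotomy w.re 0 with hre | hre | hre
  · filter_upwards [hlim.eventually_lt_const hre] with η hη
    exact ⟨hη.ne, fun h => absurd h hη.not_gt⟩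
  · have him : w.im ≠ 0 := fun h => hw (Complex.ext hre h)
    filter_upwards [self_mem_nhdsWithin] with η hη
    simp [hre, him, (Set.mem_Ioi.1 hη).ne']
  · filter_upwards [hlim.eventually_const_lt hre] with η hη
    exact ⟨hη.ne', fun _ => hre.le⟩

/-- The sesquilinear form `(x, y) ↦ ∑ i, z i * conj (x i) * y i` with diagonal entries `z` vanishes
identically on some subspace of dimension at least `k`. This is the finite-dimensional shadow of
`0 ∈ Λ_k` for a normal operator with eigenvalues `z`. -/
def HasDiagIsotropic (z : ι → ℂ) (k : ℕ) : Prop :=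
  ∃ V : Submodule ℂ (ι → ℂ), k ≤ Module.finrank ℂ V ∧
    ∀ x ∈ V, ∀ y ∈ V, ∑ i, z i * (conj (x i) * y i) = 0

namespace HasDiagIsotropic

lemma mono (h : HasDiagIsotropic z k) (hlk : l ≤ k) : HasDiagIsotropic z l := by
  obtain ⟨V, hV, hiso⟩ := h
  exact ⟨V, hlk.trans hV, hiso⟩

lemma of_injective {W : Type*} [AddCommGroup W] [Module ℂ W] (f : W →ₗ[ℂ] ι → ℂ)
    (hf : Function.Injective f) (hiso : ∀ x y, ∑ i, z i * (conj (f x i) * f y i) = 0) :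
    HasDiagIsotropic z (Module.finrank ℂ W) := by
  refine ⟨LinearMap.range f, (LinearMap.finrank_range_of_inj hf).ge, ?_⟩
  rintro _ ⟨x, rfl⟩ _ ⟨y, rfl⟩
  exact hiso x y

lemma of_eq_zero (hz : ∀ i, z i = 0) : HasDiagIsotropic z (Fintype.card ι) := by
  simpa using of_injective (z := z) LinearMap.id Function.injective_id (by simp [hz])

lemma of_mul_left {v : ℂ} (hv : v ≠ 0) (h : HasDiagIsotropic (fun i => v * z i) k) :
    HasDiagIsotropic z k := by
  obtain ⟨V, hV, hiso⟩ := h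
  refine ⟨V, hV, fun x hx y hy => ?_⟩
  simpa only [mul_assoc, ← mul_sum, mul_eq_zero, hv, false_or] using hiso x hx y hy

lemma of_comp {φ : κ → ι} (hφ : Function.Injective φ) (h : HasDiagIsotropic (z ∘ φ) k) :
    HasDiagIsotropic z k := by
  obtain ⟨V, hV, hiso⟩ := h
  let f : V →ₗ[ℂ] ι → ℂ := Function.ExtendByZero.linearMap ℂ φ ∘ₗ V.subtype
  have hf : ∀ x j, f x (φ j) = x.1 j := fun x j => hφ.extend_apply _ _ _
  have hf0 : ∀ x i, i ∉ Set.range φ → f x i = 0 := fun x i hi =>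
    Function.extend_apply' _ _ _ fun ⟨j, hj⟩ => hi ⟨j, hj⟩
  refine (of_injective f (fun x y hxy => ?_) fun x y => ?_).mono hV
  · ext j
    rw [← hf, ← hf, hxy]
  · rw [← Fintype.sum_of_injective φ hφ _ _ (fun i hi => by simp [hf0 x i hi]) fun _ => rfl]
    simp only [hf]
    exact hiso x x.2 y y.2

lemma sigma {δ : Type*} [Fintype δ] {β : δ → Type*} [∀ d, Fintype (β d)]
    {z : (Σ d, β d) → ℂ} {m : δ → ℕ} (h : ∀ d, HasDiagIsotropic (fun i => z ⟨d, i⟩) (m d)) :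
    HasDiagIsotropic z (∑ d, m d) := by
  choose V hV hiso using h
  let f : (Π d, V d) →ₗ[ℂ] (Σ d, β d) → ℂ :=
    { toFun := fun x p => (x p.1).1 p.2
      map_add' := fun _ _ => rfl
      map_smul' := fun _ _ => rfl }
  refine (of_injective f (fun x y hxy => ?_) fun x y => ?_).mono ?_
  · ext d i
    exact congrFun hxy ⟨d, i⟩
  · rw [Fintype.sum_sigma]
    exact sum_eq_zero fun d _ => hiso d _ (x d).2 _ (y d).2
  · rw [Module.finrank_pi_fintype]
    exact sum_le_sum fun d _ => hV d

lemma sumElim {z' : κ → ℂ} (h : HasDiagIsotropic z k) (h' : HasDiagIsotropic z' l) :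
    HasDiagIsotropic (Sum.elim z z') (k + l) := by
  obtain ⟨V, hV, hiso⟩ := h
  obtain ⟨V', hV', hiso'⟩ := h'
  let f : V × V' →ₗ[ℂ] ι ⊕ κ → ℂ :=
    { toFun := fun x => Sum.elim x.1 x.2
      map_add' := fun _ _ => funext (by rintro (_ | _) <;> rfl)
      map_smul' := fun _ _ => funext (by rintro (_ | _) <;> rfl) }
  refine (of_injective f (fun x y hxy => ?_) fun x y => ?_).mono ?_
  · ext i
    · exact congrFun hxy (.inl i)
    · exact congrFun hxy (.inr i)
  · simp [f, hiso x.1 x.1.2 y.1 y.1.2, hiso' x.2 x.2.2 y.2 y.2.2]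
  · rw [Module.finrank_prod]
    exact add_le_add hV hV'

lemma of_antipodal {a b : ℂ} (hab : a.re * b.re < 0) (hslope : a.im / a.re = b.im / b.re) :
    HasDiagIsotropic ![a, b] 1 := by
  have ha : a.re ≠ 0 := left_ne_zero_of_mul hab.ne
  have hb : b.re ≠ 0 := right_ne_zero_of_mul hab.ne
  have hcross : |b.re| * a + |a.re| * b = 0 := by
    have him : a.im * b.re = b.im * a.re := (div_eq_div_iff ha hb).1 hslope
    rcases mul_neg_iff.1 hab with ⟨h, h'⟩ | ⟨h, h'⟩
    · apply Complex.ext <;> simp [abs_of_pos h, abs_of_neg h'] <;> linarith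
    · apply Complex.ext <;> simp [abs_of_neg h, abs_of_pos h'] <;> linarith
  let f : ℂ →ₗ[ℂ] Fin 2 → ℂ := LinearMap.toSpanSingleton ℂ _ ![(√|b.re| : ℂ), √|a.re|]
  have hf0 : ∀ x, f x 0 = x * √|b.re| := fun _ => rfl
  have hf1 : ∀ x, f x 1 = x * √|a.re| := fun _ => rfl
  have hsqa : (√|a.re| : ℂ) ^ 2 = |a.re| := by exact_mod_cast Real.sq_sqrt (abs_nonneg _)
  have hsqb : (√|b.re| : ℂ) ^ 2 = |b.re| := by exact_mod_cast Real.sq_sqrt (abs_nonneg _)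
  refine (of_injective f (fun x y hxy => ?_) fun x y => ?_).mono (Module.finrank_self ℂ).ge
  · exact mul_right_cancel₀ (ofReal_ne_zero.2 (Real.sqrt_pos.2 (abs_pos.2 hb)).ne')
      (congrFun hxy 0)
  · simp only [Fin.sum_univ_two, hf0, hf1, Matrix.cons_val_zero, Matrix.cons_val_one, map_mul,
      conj_ofReal]
    linear_combination conj x * y * (a * hsqb + b * hsqa + hcross)

lemma add_antipodal {φ : κ → ι} (hφ : Function.Injective φ) {i j : ι} (hij : i ≠ j)
    (hi : i ∉ Set.range φ) (hj : j ∉ Set.range φ) (hre : (z i).re * (z j).re < 0)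
    (hslope : (z i).im / (z i).re = (z j).im / (z j).re) (h : HasDiagIsotropic (z ∘ φ) k) :
    HasDiagIsotropic z (k + 1) := by
  have hφij : Function.Injective (Sum.elim φ ![i, j]) := by
    refine hφ.sumElim ?_ fun x y => ?_
    · simp [Function.Injective, Fin.forall_fin_two, hij, hij.symm]
    · fin_cases y
      exacts [fun hx => hi ⟨x, hx⟩, fun hx => hj ⟨x, hx⟩]
  refine of_comp hφij ?_
  have hcomp : z ∘ Sum.elim φ ![i, j] = Sum.elim (z ∘ φ) ![z i, z j] := by
    rw [Sum.comp_elim]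
    congr 1
    ext x
    fin_cases x <;> rfl
  rw [hcomp]
  exact h.sumElim (of_antipodal hre hslope)

-- The isotropic space consists of the values at the slopes of polynomials of degree less than `m`:
-- their form is an alternating sum over the nodes of a polynomial of degree less than `2 * m`.
lemma of_alternating_of_strictMono {m : ℕ} {z : Fin (2 * m + 1) → ℂ}
    (hsign : ∀ i : Fin (2 * m + 1), (-1) ^ (i : ℕ) * (z i).re < 0)
    (hslope : StrictMono fun i => (z i).im / (z i).re) : HasDiagIsotropic z m := by
  set s : Fin (2 * m + 1) → ℝ := fun i => (z i).im / (z i).re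
  obtain ⟨w, hw, hsum⟩ := exists_alternating_weights hslope
  let c : Fin (2 * m + 1) → ℝ := fun i => √(w i / (-((-1) ^ (i : ℕ) * (z i).re)))
  have hc : ∀ i, 0 < c i := fun i => Real.sqrt_pos.2 (div_pos (hw i) (neg_pos.2 (hsign i)))
  have hzc : ∀ i, z i * c i ^ 2 = -((-1) ^ (i : ℕ) * w i * (1 + s i * I)) := fun i => by
    simpa [c, s] using mul_sq_sqrt_div_of_mul_re_neg (neg_one_pow_eq_or ℝ i) (hw i) (hsign i)
  let f : degreeLT ℂ m →ₗ[ℂ] Fin (2 * m + 1) → ℂ :=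
    LinearMap.pi fun i => (c i : ℂ) • leval (s i : ℂ) ∘ₗ (degreeLT ℂ m).subtype
  have hf : ∀ q i, f q i = c i * q.1.eval (s i : ℂ) := fun _ _ => rfl
  have hfinrank : Module.finrank ℂ (degreeLT ℂ m) = m := by
    simpa using (degreeLTEquiv ℂ m).finrank_eq
  refine (of_injective f ?_ fun q₁ q₂ => ?_).mono hfinrank.ge
  · rw [← LinearMap.ker_eq_bot, LinearMap.ker_eq_bot']
    intro q hq
    refine Subtype.ext (eq_zero_of_degree_lt_of_eval_index_eq_zero (s := univ)
      (v := fun i => (s i : ℂ)) (ofReal_injective.comp hslope.injective).injOn ?_ fun i _ => ?_)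
    · exact (mem_degreeLT.1 q.2).trans_le (Nat.cast_le.2 (by simp; omega))
    · simpa [hf, (hc i).ne'] using congrFun hq i
  · have hdeg : ((1 + C I * X) * q₁.1.map (starRingEnd ℂ) * q₂.1).degree < ↑(2 * m) :=
      degree_mul_mul_lt (by compute_degree) (degree_map_le.trans_lt (mem_degreeLT.1 q₁.2))
        (mem_degreeLT.1 q₂.2)
    rw [← neg_eq_zero, ← sum_neg_distrib, ← hsum _ hdeg]
    refine sum_congr rfl fun i _ => ?_
    have hconj : (q₁.1.map (starRingEnd ℂ)).eval (s i : ℂ) = conj (q₁.1.eval (s i : ℂ)) := by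
      rw [eval_map, ← eval₂_at_apply, conj_ofReal]
    simp only [hf, eval_mul, eval_add, eval_one, eval_C, eval_X, hconj, map_mul, conj_ofReal]
    linear_combination (-(conj (q₁.1.eval (s i : ℂ)) * q₂.1.eval (s i : ℂ))) * hzc i

-- Two neighbours of equal slope form an antipodal pair; removing them preserves the signs.
lemma of_alternating {m : ℕ} {z : Fin (2 * m + 1) → ℂ}
    (hsign : ∀ i : Fin (2 * m + 1), (-1) ^ (i : ℕ) * (z i).re < 0)
    (hslope : Monotone fun i => (z i).im / (z i).re) : HasDiagIsotropic z m := by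
  induction m with
  | zero => exact ⟨⊥, zero_le, by simp⟩
  | succ m ih =>
    by_cases hstrict : StrictMono fun i => (z i).im / (z i).re
    · exact of_alternating_of_strictMono hsign hstrict
    rw [Fin.strictMono_iff_lt_succ] at hstrict
    push Not at hstrict
    obtain ⟨j, hj⟩ := hstrict
    let φ : Fin (2 * m + 1) → Fin (2 * (m + 1) + 1) := fun i =>
      ⟨if (i : ℕ) < j then i else i + 2, by split_ifs <;> omega⟩
    have hφ : StrictMono φ := fun i i' h => by
      simp only [φ, Fin.lt_def] at h ⊢
      split_ifs <;> omega
    have hφsign : ∀ i, (-1 : ℝ) ^ (φ i : ℕ) = (-1) ^ (i : ℕ) := fun i => by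
      simp only [φ]
      split_ifs <;> simp [pow_add]
    refine add_antipodal (i := j.castSucc) (j := j.succ) hφ.injective (Fin.castSucc_lt_succ).ne
      ?_ ?_ ?_ ((hslope (Fin.castSucc_lt_succ).le).antisymm hj)
      (ih (fun i => by rw [← hφsign]; exact hsign (φ i)) (hslope.comp hφ.monotone))
    · rintro ⟨i, hi⟩
      have := congrArg Fin.val hi
      simp only [φ, Fin.val_castSucc] at this
      split_ifs at this <;> omega
    · rintro ⟨i, hi⟩
      have := congrArg Fin.val hi
      simp only [φ, Fin.val_succ] at this
      split_ifs at this <;> omega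
    · have hj₁ := hsign j.castSucc
      have hj₂ := hsign j.succ
      rw [Fin.val_castSucc] at hj₁
      rw [Fin.val_succ, pow_succ] at hj₂
      rcases neg_one_pow_eq_or ℝ (j : ℕ) with h | h <;> rw [h] at hj₁ hj₂ <;> nlinarith

-- The indices congruent to `d` modulo `r` form an alternating string `a d, b d, a (d + r), …`.
lemma of_interlacing {p r : ℕ} (hr : 0 < r) {a : Fin (p + r) → ℂ} {b : Fin p → ℂ}
    (ha : ∀ i, (a i).re < 0) (hb : ∀ i, 0 < (b i).re)
    (hab : ∀ i : Fin p, (a (i.castAdd r)).im / (a (i.castAdd r)).re ≤ (b i).im / (b i).re)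
    (hba : ∀ i : Fin p, (b i).im / (b i).re ≤ (a (i.addNat r)).im / (a (i.addNat r)).re) :
    HasDiagIsotropic (Sum.elim a b) p := by
  let m : Fin r → ℕ := fun d => (p + r - 1 - d) / r
  have hb_lt : ∀ (d : Fin r) (t : ℕ), t < m d → d + r * t < p := fun d t =>
    (lt_residue_card_iff d.2).1
  have ha_lt : ∀ (d : Fin r) (t : ℕ), t ≤ m d → d + r * t < p + r := by
    rintro d (_ | t) ht
    · omega
    · have := hb_lt d t ht
      rw [Nat.mul_add_one]
      omega
  let φ : (Σ d : Fin r, Fin (2 * m d + 1)) → Fin (p + r) ⊕ Fin p := fun x =>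
    if hx : (x.2 : ℕ) % 2 = 0 then .inl ⟨x.1 + r * (x.2 / 2), ha_lt _ _ (by omega)⟩
    else .inr ⟨x.1 + r * (x.2 / 2), hb_lt _ _ (by omega)⟩
  have hφ : Function.Injective φ := by
    rintro ⟨d, i⟩ ⟨d', i'⟩ h
    simp only [φ] at h
    split_ifs at h with hi hi'
    all_goals
      simp only [Sum.inl.injEq, Sum.inr.injEq, Fin.mk.injEq] at h
      try obtain ⟨rfl, hii'⟩ := residue_add_mul_inj h
      try exact congrArg (Sigma.mk d) (Fin.ext (by omega))
  refine of_comp hφ ((sigma fun d => of_alternating (fun i => ?_) ?_).mono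
    (le_sum_residue_card p hr))
  · by_cases hi : (i : ℕ) % 2 = 0
    · simpa [φ, hi, (Nat.even_iff.2 hi).neg_one_pow] using ha _
    · simpa [φ, hi, (Nat.odd_iff.2 (Nat.mod_two_ne_zero.1 hi)).neg_one_pow] using hb _
  · refine Fin.monotone_iff_le_succ.2 fun i => ?_
    by_cases hi : (i : ℕ) % 2 = 0
    · have hi' : ¬ ((i : ℕ) + 1) % 2 = 0 := by omega
      have hdiv : ((i : ℕ) + 1) / 2 = i / 2 := by omega
      simpa [φ, hi, hi', hdiv] using hab ⟨d + r * (i / 2), hb_lt d _ (by omega)⟩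
    · have hi' : ((i : ℕ) + 1) % 2 = 0 := by omega
      have hdiv : d + r * (((i : ℕ) + 1) / 2) = d + r * (i / 2) + r := by
        rw [show ((i : ℕ) + 1) / 2 = i / 2 + 1 by omega, Nat.mul_add_one, add_assoc]
      simpa [φ, hi, hi', hdiv, Fin.addNat] using hba ⟨d + r * (i / 2), hb_lt d _ (by omega)⟩

lemma of_forall_antipodal {p : ℕ} {a b : Fin p → ℂ} (hre : ∀ i, (a i).re * (b i).re < 0)
    (hslope : ∀ i, (a i).im / (a i).re = (b i).im / (b i).re) :
    HasDiagIsotropic (Sum.elim a b) p := by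
  let φ : (Σ _ : Fin p, Fin 2) → Fin p ⊕ Fin p := fun x => ![.inl x.1, .inr x.1] x.2
  have hφ : Function.Injective φ := by
    rintro ⟨i, x⟩ ⟨j, y⟩ h
    fin_cases x <;> fin_cases y <;> simp [φ] at h <;> simp [h]
  have hpair : ∀ i, HasDiagIsotropic (fun x => (Sum.elim a b ∘ φ) ⟨i, x⟩) 1 := fun i => by
    convert of_antipodal (hre i) (hslope i) using 1
    ext x
    fin_cases x <;> rfl
  exact of_comp hφ ((sigma hpair).mono (by simp))

lemma of_card_halfPlane_sumElim {p r : ℕ} {a : Fin (p + r) → ℂ} {b : Fin p → ℂ}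
    (ha : ∀ i, (a i).re < 0) (hb : ∀ i, 0 < (b i).re)
    (ha_mono : Monotone fun i => (a i).im / (a i).re)
    (hb_mono : Monotone fun i => (b i).im / (b i).re)
    (h : ∀ u : ℂ, u ≠ 0 → p ≤ #{x | 0 ≤ (u * Sum.elim a b x).re}) :
    HasDiagIsotropic (Sum.elim a b) p := by
  have hab : ∀ i : Fin p,
      (a (i.castAdd r)).im / (a (i.castAdd r)).re ≤ (b i).im / (b i).re := by
    refine fun i => apply_le_apply_of_forall_card_le ha_mono hb_mono fun t =>
      Nat.add_le_add_right ?_ _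
    have ht : -(t : ℂ) - I ≠ 0 := fun h0 => by simpa using congrArg Complex.im h0
    simpa [div_le_iff_of_neg, le_div_iff₀, ha, hb] using (h _ ht).trans_eq (card_filter_sum _)
  have hba : ∀ i : Fin p,
      (b i).im / (b i).re ≤ (a (i.addNat r)).im / (a (i.addNat r)).re := by
    refine fun i => apply_le_apply_of_forall_card_le hb_mono ha_mono fun t => ?_
    have ht : (t : ℂ) + I ≠ 0 := fun h0 => by simpa using congrArg Complex.im h0
    have hcount : p ≤ #{i | t ≤ (a i).im / (a i).re} + #{j | (b j).im / (b j).re ≤ t} := by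
      simpa [le_div_iff_of_neg, div_le_iff₀, ha, hb] using (h _ ht).trans_eq (card_filter_sum _)
    rw [Fin.val_addNat]
    omega
  rcases r.eq_zero_or_pos with rfl | hr
  · exact of_forall_antipodal (fun i => mul_neg_of_neg_of_pos (ha _) (hb i)) fun i =>
      (hab i).antisymm (hba i)
  · exact of_interlacing hr ha hb hab hba

lemma of_card_halfPlane_of_re_ne_zero (hz : ∀ i, (z i).re ≠ 0)
    (h : ∀ u : ℂ, u ≠ 0 → #{i | 0 < (z i).re} ≤ #{i | 0 ≤ (u * z i).re}) :
    HasDiagIsotropic z #{i | 0 < (z i).re} := by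
  set p := #{i | 0 < (z i).re} with hp
  have hneg : p ≤ Fintype.card {i // (z i).re < 0} := by
    refine (h (-1) (by simp)).trans ?_
    rw [Fintype.card_subtype]
    refine card_le_card (monotone_filter_right _ fun i _ hi => ?_)
    exact lt_of_le_of_ne (by simpa using hi) (hz i)
  obtain ⟨r, hr⟩ := Nat.exists_eq_add_of_le hneg
  have hpos : Fintype.card {i // ¬ (z i).re < 0} = p := by
    rw [Fintype.card_subtype, hp]
    exact congrArg card (filter_congr fun i _ => by rw [not_lt, (hz i).symm.le_iff_lt])
  obtain ⟨ea, ha_mono⟩ := exists_equiv_fin_monotone hr fun i => (z i).im / (z i).re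
  obtain ⟨eb, hb_mono⟩ := exists_equiv_fin_monotone hpos fun i => (z i).im / (z i).re
  let e : Fin (p + r) ⊕ Fin p ≃ ι := (ea.sumCongr eb).trans (Equiv.sumCompl _)
  have hze : z ∘ e = Sum.elim (fun i => z (ea i)) (fun j => z (eb j)) := by
    ext (i | j) <;> rfl
  refine of_comp e.injective ?_
  rw [hze]
  refine of_card_halfPlane_sumElim (fun i => (ea i).2)
    (fun j => lt_of_le_of_ne (not_lt.1 (eb j).2) (hz _).symm) ha_mono hb_mono fun u hu => ?_
  rw [← hze]
  exact (h u hu).trans_eq (card_equiv e (by simp)).symm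

-- Rotating a half-plane that contains the fewest entries makes its boundary avoid all entries.
lemma of_card_halfPlane_of_ne_zero (hz : ∀ i, z i ≠ 0)
    (h : ∀ u : ℂ, u ≠ 0 → k ≤ #{i | 0 ≤ (u * z i).re}) : HasDiagIsotropic z k := by
  obtain ⟨u, hu, hmin⟩ : ∃ u : ℂ, u ≠ 0 ∧ ∀ v : ℂ, v ≠ 0 →
      #{i | 0 ≤ (u * z i).re} ≤ #{i | 0 ≤ (v * z i).re} :=
    ⟨_, Function.argminOn_mem _ {u : ℂ | u ≠ 0} ⟨1, one_ne_zero⟩, fun v hv =>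
      Function.argminOn_le (fun u : ℂ => #{i | 0 ≤ (u * z i).re}) {u : ℂ | u ≠ 0} hv⟩
  obtain ⟨η, hη⟩ := (Filter.eventually_all.2 fun i =>
    eventually_re_mul_one_sub_ne_zero (mul_ne_zero hu (hz i))).exists
  have hv : u * (1 - η * I) ≠ 0 := mul_ne_zero hu fun h0 => by simpa using congrArg Complex.re h0
  have hcomm : ∀ i, u * z i * (1 - η * I) = u * (1 - η * I) * z i := fun i => mul_right_comm _ _ _
  simp only [hcomm] at hη
  have hpos : #{i | 0 ≤ (u * (1 - η * I) * z i).re} = #{i | 0 < (u * (1 - η * I) * z i).re} :=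
    congrArg card (filter_congr fun i _ => (hη i).1.symm.le_iff_lt)
  refine of_mul_left hv ((of_card_halfPlane_of_re_ne_zero (fun i => (hη i).1)
    fun w hw => ?_).mono ((h _ hv).trans_eq hpos))
  calc #{i | 0 < (u * (1 - η * I) * z i).re} ≤ #{i | 0 ≤ (u * z i).re} :=
        card_le_card (monotone_filter_right _ fun i _ => (hη i).2)
    _ ≤ _ := by simpa only [mul_assoc] using hmin _ (mul_ne_zero hw hv)

theorem of_card_halfPlane (h : ∀ u : ℂ, u ≠ 0 → k ≤ #{i | 0 ≤ (u * z i).re}) :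
    HasDiagIsotropic z k := by
  classical
  let e : {i // z i = 0} ⊕ {i // ¬ z i = 0} ≃ ι := Equiv.sumCompl fun i => z i = 0
  have hze : z ∘ e = Sum.elim (fun i => z i.1) (fun i => z i.1) := by
    ext (i | i) <;> rfl
  refine of_comp e.injective ?_
  rw [hze]
  refine ((of_eq_zero fun i => i.2).sumElim (of_card_halfPlane_of_ne_zero (fun i => i.2)
    (k := k - Fintype.card {i // z i = 0}) fun u hu => ?_)).mono (by omega)
  have hcard : #{x | 0 ≤ (u * z (e x)).re} = #{i | 0 ≤ (u * z i).re} := card_equiv e (by simp)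
  have hcount := (h u hu).trans_eq hcard.symm
  rw [card_filter_sum fun x => 0 ≤ (u * z (e x)).re] at hcount
  exact Nat.sub_le_iff_le_add'.2 (hcount.trans (Nat.add_le_add_right (card_le_univ _) _))

end HasDiagIsotropic

end DiagonalForms

section FiniteDimensional

variable {K E : Type*} [DivisionRing K] [AddCommGroup E] [Module K E]

lemma exists_le_le_finrank_eq {M U : Submodule K E} [FiniteDimensional K M] (hMU : M ≤ U) {r : ℕ}
    (hM : Module.finrank K M ≤ r) (hr : (r : Cardinal) ≤ Module.rank K U) :
    ∃ N : Submodule K E, M ≤ N ∧ N ≤ U ∧ FiniteDimensional K N ∧ Module.finrank K N = r := by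
  induction r, hM using Nat.le_induction with
  | base => exact ⟨M, le_rfl, hMU, inferInstance, rfl⟩
  | succ n _ ih =>
    obtain ⟨N, hMN, hNU, hfd, hn⟩ := ih (le_trans (by exact_mod_cast n.le_succ) hr)
    obtain ⟨x, hxU, hxN⟩ : ∃ x ∈ U, x ∉ N := by
      refine Set.not_subset.1 fun hUN => ?_
      have hle := hr.trans (Submodule.rank_mono hUN)
      rw [← Module.finrank_eq_rank, hn, Nat.cast_le] at hle
      exact absurd hle n.lt_succ_self.not_ge
    have hx0 : x ≠ 0 := fun h => hxN (h ▸ N.zero_mem)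
    have hxspan := Submodule.mem_span_singleton_self (R := K) x
    refine ⟨N ⊔ Submodule.span K {x}, hMN.trans le_sup_left,
      sup_le hNU ((Submodule.span_singleton_le_iff_mem x U).2 hxU), inferInstance,
      le_antisymm ?_ ?_⟩
    · have hadd := Submodule.finrank_add_le_finrank_add_finrank N (Submodule.span K {x})
      rwa [finrank_span_singleton hx0, hn] at hadd
    · rw [← hn]
      exact Submodule.finrank_lt_finrank_of_lt
        (SetLike.lt_iff_le_and_exists.2 ⟨le_sup_left, x, Submodule.mem_sup_right hxspan, hxN⟩)

lemma exists_le_finrank_eq {U : Submodule K E} {k : ℕ} (hk : (k : Cardinal) ≤ Module.rank K U) :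
    ∃ W ≤ U, FiniteDimensional K W ∧ Module.finrank K W = k := by
  obtain ⟨W, -, hW⟩ := exists_le_le_finrank_eq (bot_le (a := U)) (by simp) hk
  exact ⟨W, hW⟩

lemma finiteDimensional_of_rank_lt {U : Submodule K E} {k : ℕ} (h : Module.rank K U < k) :
    FiniteDimensional K U :=
  Module.rank_lt_aleph0_iff.1 (h.trans Cardinal.natCast_lt_aleph0)

lemma finrank_lt_of_rank_lt {U : Submodule K E} {k : ℕ} (h : Module.rank K U < k) :
    Module.finrank K U < k := by
  have := finiteDimensional_of_rank_lt h
  rwa [← Module.finrank_eq_rank, Nat.cast_lt] at h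

lemma exists_forall_le_eq_of_antitoneOn {f : ℝ → Submodule K E} (hf : AntitoneOn f (Set.Ioi 0))
    {k : ℕ} (hk : ∀ t > 0, Module.rank K (f t) < k) :
    ∃ t₀ > 0, ∀ t, 0 < t → t ≤ t₀ → f t = f t₀ := by
  have hbdd : BddAbove ((fun t => Module.finrank K (f t)) '' Set.Ioi 0) :=
    ⟨k, by rintro _ ⟨t, ht, rfl⟩; exact (finrank_lt_of_rank_lt (hk t ht)).le⟩
  obtain ⟨t₀, ht₀, hmax⟩ := Nat.sSup_mem (Set.Nonempty.image _ ⟨1, Set.mem_Ioi.2 one_pos⟩) hbdd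
  refine ⟨t₀, ht₀, fun t ht hle => ?_⟩
  have := finiteDimensional_of_rank_lt (hk t ht)
  exact (Submodule.eq_of_le_of_finrank_le (hf ht ht₀ hle)
    ((le_csSup hbdd ⟨t, ht, rfl⟩).trans_eq hmax.symm)).symm

end FiniteDimensional

section Projections

variable {E : Type*} [NormedAddCommGroup E] [InnerProductSpace ℂ E] {B : E →L[ℂ] E}
  {U W U' W' K L : Submodule ℂ E}

/-- The sesquilinear form `⟪x, B y⟫` of `B` vanishes on `U × W` and on `W × U`. -/
def FormOrthogonal (B : E →L[ℂ] E) (U W : Submodule ℂ E) : Prop :=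
  ∀ x ∈ U, ∀ y ∈ W, ⟪x, B y⟫_ℂ = 0 ∧ ⟪y, B x⟫_ℂ = 0

lemma FormOrthogonal.mono (h : FormOrthogonal B U W) (hU : U' ≤ U) (hW : W' ≤ W) :
    FormOrthogonal B U' W' :=
  fun x hx y hy => h x (hU hx) y (hW hy)

lemma FormOrthogonal.inner_add_self (h : FormOrthogonal B U W) {x y : E} (hx : x ∈ U)
    (hy : y ∈ W) : ⟪x + y, B (x + y)⟫_ℂ = ⟪x, B x⟫_ℂ + ⟪y, B y⟫_ℂ := by
  obtain ⟨hxy, hyx⟩ := h x hx y hy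
  simp only [map_add, inner_add_left, inner_add_right, hxy, hyx]
  ring

lemma map_mem_of_commute [K.HasOrthogonalProjection] (h : Commute K.starProjection B) {x : E}
    (hx : x ∈ K) : B x ∈ K := by
  have := (ContinuousLinearMap.IsIdempotentElem.commute_iff K.isIdempotentElem_starProjection).1 h
  rw [Submodule.range_starProjection] at this
  exact this.1 hx

lemma map_mem_orthogonal_of_commute [K.HasOrthogonalProjection] (h : Commute K.starProjection B)
    {x : E} (hx : x ∈ Kᗮ) : B x ∈ Kᗮ := by
  have := (ContinuousLinearMap.IsIdempotentElem.commute_iff K.isIdempotentElem_starProjection).1 h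
  rw [Submodule.ker_starProjection] at this
  exact this.2 hx

lemma formOrthogonal_orthogonal_of_commute [K.HasOrthogonalProjection]
    (h : Commute K.starProjection B) : FormOrthogonal B K Kᗮ := fun _ hx _ hy =>
  ⟨Submodule.inner_right_of_mem_orthogonal hx (map_mem_orthogonal_of_commute h hy),
    Submodule.inner_left_of_mem_orthogonal (map_mem_of_commute h hx) hy⟩

lemma starProjection_starProjection_of_mem_inf_orthogonal [K.HasOrthogonalProjection]
    [L.HasOrthogonalProjection] (h : Commute K.starProjection L.starProjection) {x : E}
    (hx : x ∈ (K ⊓ L)ᗮ) : L.starProjection (K.starProjection x) = 0 := by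
  have hmem : L.starProjection (K.starProjection x) ∈ K ⊓ L :=
    ⟨map_mem_of_commute h (K.starProjection_apply_mem x), L.starProjection_apply_mem _⟩
  rw [← inner_self_eq_zero (𝕜 := ℂ), Submodule.inner_starProjection_left_eq_right,
    Submodule.starProjection_eq_self_iff.2 hmem.2, Submodule.inner_starProjection_left_eq_right,
    Submodule.starProjection_eq_self_iff.2 hmem.1]
  exact Submodule.inner_left_of_mem_orthogonal hmem hx

lemma formOrthogonal_inf_orthogonal [K.HasOrthogonalProjection] [L.HasOrthogonalProjection]
    (hK : Commute K.starProjection B) (hL : Commute L.starProjection B)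
    (hKL : Commute K.starProjection L.starProjection) : FormOrthogonal B (K ⊓ L) (K ⊓ L)ᗮ := by
  intro x hx y hy
  refine ⟨?_, Submodule.inner_left_of_mem_orthogonal
    (⟨map_mem_of_commute hK hx.1, map_mem_of_commute hL hx.2⟩ : B x ∈ K ⊓ L) hy⟩
  have hcomm : L.starProjection (K.starProjection (B y)) =
      B (L.starProjection (K.starProjection y)) :=
    congrArg (fun T : E →L[ℂ] E => T y) (hL.mul_left hK).eq
  rw [← Submodule.starProjection_eq_self_iff.2 hx.1, Submodule.inner_starProjection_left_eq_right,
    ← Submodule.starProjection_eq_self_iff.2 hx.2, Submodule.inner_starProjection_left_eq_right,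
    hcomm, starProjection_starProjection_of_mem_inf_orthogonal hKL hy, map_zero, inner_zero_right]

end Projections

section HalfPlanes

variable {T S B : H →L[ℂ] H} {c d e : ℂ} {x : H}

lemma re_inner_nonneg_of_negPart_apply_eq_zero (hT : IsSelfAdjoint T) (hx : T⁻ x = 0) :
    0 ≤ (⟪x, T x⟫_ℂ).re := by
  have hTx : T x = T⁺ x := by
    conv_lhs => rw [← CFC.posPart_sub_negPart T hT, sub_apply, hx, sub_zero]
  rw [hTx]
  exact ((ContinuousLinearMap.nonneg_iff_isPositive T⁺).1
    (CFC.posPart_nonneg T)).re_inner_nonneg_right x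

lemma apply_eq_zero_of_re_inner_nonpos (hT : 0 ≤ T) (hx : (⟪x, T x⟫_ℂ).re ≤ 0) : T x = 0 := by
  obtain ⟨R, rfl⟩ := CStarAlgebra.nonneg_iff_eq_star_mul_self.1 hT
  have hRx : ⟪x, (star R * R) x⟫_ℂ = ⟪R x, R x⟫_ℂ :=
    ContinuousLinearMap.adjoint_inner_right R x (R x)
  have hR : R x = 0 := (re_inner_self_nonpos (𝕜 := ℂ)).1 (by rwa [hRx] at hx)
  rw [mul_apply_eq_comp, hR, map_zero]

lemma re_inner_neg_of_mem_ker_negPart_orthogonal (hT : IsSelfAdjoint T)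
    (hx : x ∈ (T⁻ : H →L[ℂ] H).kerᗮ) (hx0 : x ≠ 0) : (⟪x, T x⟫_ℂ).re < 0 := by
  have hpos : T⁺ x = 0 := by
    have hmem : T⁺ (T⁺ x) ∈ (T⁻ : H →L[ℂ] H).ker :=
      congrArg (fun R : H →L[ℂ] H => R (T⁺ x)) (CFC.negPart_mul_posPart T)
    rw [← inner_self_eq_zero (𝕜 := ℂ)]
    exact ((IsSelfAdjoint.of_nonneg (CFC.posPart_nonneg T)).isSymmetric _ _).symm.trans
      (Submodule.inner_right_of_mem_orthogonal hmem hx)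
  have hTx : T x = -T⁻ x := by
    conv_lhs => rw [← CFC.posPart_sub_negPart T hT, sub_apply, hpos, zero_sub]
  rw [hTx, inner_neg_right, neg_re, neg_lt_zero]
  by_contra! hle
  have hker : x ∈ (T⁻ : H →L[ℂ] H).ker :=
    apply_eq_zero_of_re_inner_nonpos (CFC.negPart_nonneg T) hle
  exact hx0 (inner_self_eq_zero.1 (Submodule.inner_right_of_mem_orthogonal hker hx))

instance (T : H →L[ℂ] H) : CompleteSpace T.ker :=
  T.isClosed_ker.completeSpace_coe

lemma commute_starProjection_ker_negPart (hT : IsSelfAdjoint T) (hST : Commute S T) :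
    Commute (T⁻ : H →L[ℂ] H).ker.starProjection S := by
  have hinv : ∀ R : H →L[ℂ] H, Commute R T →
      (T⁻ : H →L[ℂ] H).ker ∈ Module.End.invtSubmodule (R : H →ₗ[ℂ] H) := by
    intro R hR y hy
    have hcomm : Commute T⁻ R := by
      rw [CFC.negPart_def]
      exact hR.symm.cfcₙ_real _
    have happ : T⁻ (R y) = R (T⁻ y) := congrArg (fun Q : H →L[ℂ] H => Q y) hcomm.eq
    change T⁻ y = 0 at hy
    change T⁻ (R y) = 0
    rw [happ, hy, map_zero]
  refine (ContinuousLinearMap.IsIdempotentElem.commute_iff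
    (Submodule.isIdempotentElem_starProjection _)).2 ⟨?_, ?_⟩
  · rw [Submodule.range_starProjection]
    exact hinv S hST
  · rw [Submodule.ker_starProjection]
    exact ContinuousLinearMap.orthogonal_mem_invtSubmodule
      (hinv (star S) (by simpa only [hT.star_eq] using hST.star_star))

lemma isSelfAdjoint_reOp (T : H →L[ℂ] H) : IsSelfAdjoint (reOp T) := by
  have h2 : IsSelfAdjoint (2⁻¹ : ℂ) := by simp [isSelfAdjoint_iff]
  exact h2.smul (IsSelfAdjoint.add_star_self T)

lemma inner_reOp (T : H →L[ℂ] H) (x y : H) :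
    ⟪x, reOp T y⟫_ℂ = 2⁻¹ * (⟪x, T y⟫_ℂ + starRingEnd ℂ ⟪y, T x⟫_ℂ) := by
  rw [inner_conj_symm, ← ContinuousLinearMap.adjoint_inner_right, ← inner_add_right]
  exact inner_smul_right _ _ _

lemma commute_reOp_smul (hS : Commute S B) (hS' : Commute S (star B)) (d : ℂ) :
    Commute S (reOp (d • B)) := by
  rw [reOp, ← ContinuousLinearMap.star_eq_adjoint, star_smul]
  exact ((hS.smul_right d).add_right (hS'.smul_right (star d))).smul_right _

/-- The spectral subspace of a normal operator `B` for the closed half-plane `0 ≤ Re (d z)`,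
obtained without spectral measures as the kernel of the negative part of `Re (d B)`. -/
def halfPlaneSubspace (B : H →L[ℂ] H) (d : ℂ) : Submodule ℂ H :=
  ((reOp (d • B))⁻ : H →L[ℂ] H).ker

instance (B : H →L[ℂ] H) (d : ℂ) : CompleteSpace (halfPlaneSubspace B d) :=
  inferInstanceAs (CompleteSpace ((reOp (d • B))⁻ : H →L[ℂ] H).ker)

lemma re_mul_inner_eq (B : H →L[ℂ] H) (d : ℂ) (x : H) :
    (d * ⟪x, B x⟫_ℂ).re = (⟪x, reOp (d • B) x⟫_ℂ).re := by
  rw [inner_reOp, smul_apply, inner_smul_right, add_conj]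
  simp

lemma re_mul_inner_nonneg_of_mem_halfPlaneSubspace (hx : x ∈ halfPlaneSubspace B d) :
    0 ≤ (d * ⟪x, B x⟫_ℂ).re := by
  rw [re_mul_inner_eq]
  exact re_inner_nonneg_of_negPart_apply_eq_zero (isSelfAdjoint_reOp _) hx

lemma re_mul_inner_neg_of_mem_halfPlaneSubspace_orthogonal (hx : x ∈ (halfPlaneSubspace B d)ᗮ)
    (hx0 : x ≠ 0) : (d * ⟪x, B x⟫_ℂ).re < 0 := by
  rw [re_mul_inner_eq]
  exact re_inner_neg_of_mem_ker_negPart_orthogonal (isSelfAdjoint_reOp _) hx hx0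

lemma commute_halfPlaneSubspace (hS : Commute S B) (hS' : Commute S (star B)) (d : ℂ) :
    Commute (halfPlaneSubspace B d).starProjection S :=
  commute_starProjection_ker_negPart (isSelfAdjoint_reOp _) (commute_reOp_smul hS hS' d)

lemma commute_halfPlaneSubspace_self [IsStarNormal B] (d : ℂ) :
    Commute (halfPlaneSubspace B d).starProjection B :=
  commute_halfPlaneSubspace (Commute.refl B) (star_comm_self' B).symm d

lemma commute_halfPlaneSubspace_halfPlaneSubspace [IsStarNormal B] (d e : ℂ) :
    Commute (halfPlaneSubspace B d).starProjection (halfPlaneSubspace B e).starProjection := by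
  have hstar : Commute (halfPlaneSubspace B e).starProjection (star B) := by
    simpa only [(isSelfAdjoint_starProjection _).star_eq] using
      (commute_halfPlaneSubspace_self (B := B) e).star_star
  exact commute_halfPlaneSubspace (commute_halfPlaneSubspace_self e) hstar d

lemma halfPlaneSubspace_inf_le [IsStarNormal B] {a b : ℝ} (ha : 0 ≤ a) (hb : 0 ≤ b) :
    halfPlaneSubspace B d ⊓ halfPlaneSubspace B e ≤ halfPlaneSubspace B (a * d + b * e) := by
  rintro x ⟨hxd, hxe⟩
  set K := halfPlaneSubspace B (a * d + b * e)
  set y := x - K.starProjection x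
  have hy_mem : ∀ f, x ∈ halfPlaneSubspace B f → y ∈ halfPlaneSubspace B f := fun f hxf =>
    Submodule.sub_mem _ hxf
      (map_mem_of_commute (commute_halfPlaneSubspace_halfPlaneSubspace f (a * d + b * e)) hxf)
  have hd := re_mul_inner_nonneg_of_mem_halfPlaneSubspace (hy_mem d hxd)
  have he := re_mul_inner_nonneg_of_mem_halfPlaneSubspace (hy_mem e hxe)
  have hre : ((a * d + b * e) * ⟪y, B y⟫_ℂ).re =
      a * (d * ⟪y, B y⟫_ℂ).re + b * (e * ⟪y, B y⟫_ℂ).re := by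
    rw [add_mul, mul_assoc, mul_assoc, add_re, re_ofReal_mul, re_ofReal_mul]
  have hy : y = 0 := by
    by_contra hy
    have hneg := re_mul_inner_neg_of_mem_halfPlaneSubspace_orthogonal
      (K.sub_starProjection_mem_orthogonal x) hy
    rw [hre] at hneg
    exact hneg.not_ge (by positivity)
  exact Submodule.starProjection_eq_self_iff.1 (sub_eq_zero.1 hy).symm

end HalfPlanes

section Sectors

open scoped Topology

variable {B : H →L[ℂ] H} {v : ℂ} {ε : ℝ}

/-- The direction `v` turned slightly: the boundary lines of the half-planes `0 ≤ Re (v z)` and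
`0 ≤ Re (tilt v ε z)` bound a sector that fills up the former half-plane as `ε → 0`. -/
def tilt (v : ℂ) (ε : ℝ) : ℂ := v * (1 - ε * I)

lemma re_tilt_mul (v w : ℂ) (ε : ℝ) : (tilt v ε * w).re = (v * w).re + ε * (v * w).im := by
  simp only [tilt, mul_re, mul_im, sub_re, sub_im, one_re, one_im, ofReal_re, ofReal_im, I_re, I_im]
  ring

/-- The part of a normal operator in the sector `0 ≤ Re (v z)`, `0 ≤ Re (tilt v ε z)`. -/
def sectorSubspace (B : H →L[ℂ] H) (v : ℂ) (ε : ℝ) : Submodule ℂ H :=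
  halfPlaneSubspace B v ⊓ halfPlaneSubspace B (tilt v ε)

lemma antitoneOn_sectorSubspace [IsStarNormal B] (v : ℂ) (ε : ℝ) :
    AntitoneOn (fun t => sectorSubspace B v (t * ε)) (Set.Ioi 0) := by
  intro s hs t ht hst
  rw [Set.mem_Ioi] at hs ht
  have htilt : tilt v (s * ε) = (1 - s / t : ℝ) * v + (s / t : ℝ) * tilt v (t * ε) := by
    simp only [tilt]
    push_cast
    have : (t : ℂ) ≠ 0 := by exact_mod_cast ht.ne'
    field_simp
    ring
  refine le_inf inf_le_left ?_
  rw [htilt]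
  exact halfPlaneSubspace_inf_le (sub_nonneg.2 ((div_le_one ht).2 hst)) (by positivity)

/-- `M` reduces `B` and the numerical values of `B` on `Mᗮ` lie in the half-plane `Re (v z) ≤ 0`
and avoid `0`. -/
structure IsSeparating (B : H →L[ℂ] H) (v : ℂ) (M : Submodule ℂ H) : Prop where
  formOrthogonal : FormOrthogonal B M Mᗮ
  re_nonpos : ∀ x ∈ Mᗮ, (v * ⟪x, B x⟫_ℂ).re ≤ 0
  inner_ne_zero : ∀ x ∈ Mᗮ, x ≠ 0 → ⟪x, B x⟫_ℂ ≠ 0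

lemma re_mul_inner_eq_zero_of_tilt {y : H} (hv : y ∈ halfPlaneSubspace B v) {t₀ : ℝ} (ht₀ : 0 < t₀)
    (h : ∀ t, 0 < t → t ≤ t₀ → y ∈ (halfPlaneSubspace B (tilt v (t * ε)))ᗮ) :
    (v * ⟪y, B y⟫_ℂ).re = 0 := by
  refine le_antisymm ?_ (re_mul_inner_nonneg_of_mem_halfPlaneSubspace hv)
  have hnonpos : ∀ t, 0 < t → t ≤ t₀ →
      (v * ⟪y, B y⟫_ℂ).re + t * ε * (v * ⟪y, B y⟫_ℂ).im ≤ 0 := by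
    intro t ht htt₀
    rw [← re_tilt_mul]
    rcases eq_or_ne y 0 with rfl | hy
    · simp
    · exact (re_mul_inner_neg_of_mem_halfPlaneSubspace_orthogonal (h t ht htt₀) hy).le
  have hlim : Filter.Tendsto (fun t : ℝ => (v * ⟪y, B y⟫_ℂ).re + t * ε * (v * ⟪y, B y⟫_ℂ).im)
      (𝓝[>] 0) (𝓝 (v * ⟪y, B y⟫_ℂ).re) := by
    have hcont : Continuous fun t : ℝ => (v * ⟪y, B y⟫_ℂ).re + t * ε * (v * ⟪y, B y⟫_ℂ).im := by
      fun_prop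
    simpa using (hcont.tendsto 0).mono_left nhdsWithin_le_nhds
  refine le_of_tendsto hlim ?_
  filter_upwards [Ioc_mem_nhdsGT ht₀] with t ht using hnonpos t ht.1 ht.2

lemma IsSeparating.of_sectorSubspace_eq [IsStarNormal B] {t₀ : ℝ} (ht₀ : 0 < t₀)
    (hconst : ∀ t, 0 < t → t ≤ t₀ → sectorSubspace B v (t * ε) = sectorSubspace B v (t₀ * ε)) :
    IsSeparating B v (sectorSubspace B v (t₀ * ε)) := by
  set K := halfPlaneSubspace B v
  set M := sectorSubspace B v (t₀ * ε)
  have htilt : ∀ x ∈ Mᗮ, ∀ t, 0 < t → t ≤ t₀ →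
      K.starProjection x ∈ (halfPlaneSubspace B (tilt v (t * ε)))ᗮ := fun x hx t ht htt₀ =>
    (Submodule.starProjection_apply_eq_zero_iff _).1
      (starProjection_starProjection_of_mem_inf_orthogonal
        (commute_halfPlaneSubspace_halfPlaneSubspace _ _)
        (show x ∈ (sectorSubspace B v (t * ε))ᗮ by rwa [hconst t ht htt₀]))
  have hdecomp : ∀ x ∈ Mᗮ, (v * ⟪x, B x⟫_ℂ).re =
      (v * ⟪x - K.starProjection x, B (x - K.starProjection x)⟫_ℂ).re := by
    intro x hx
    have hsum := (formOrthogonal_orthogonal_of_commute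
      (commute_halfPlaneSubspace_self v)).inner_add_self (B := B)
        (K.starProjection_apply_mem x) (K.sub_starProjection_mem_orthogonal x)
    rw [add_sub_cancel] at hsum
    rw [hsum, mul_add, add_re, re_mul_inner_eq_zero_of_tilt (K.starProjection_apply_mem x) ht₀
      (htilt x hx), zero_add]
  refine ⟨formOrthogonal_inf_orthogonal (commute_halfPlaneSubspace_self _)
    (commute_halfPlaneSubspace_self _) (commute_halfPlaneSubspace_halfPlaneSubspace _ _),
    fun x hx => ?_, fun x hx hx0 hzero => ?_⟩
  · rw [hdecomp x hx]
    rcases eq_or_ne (x - K.starProjection x) 0 with hz | hz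
    · simp [hz]
    · exact (re_mul_inner_neg_of_mem_halfPlaneSubspace_orthogonal
        (K.sub_starProjection_mem_orthogonal x) hz).le
  · rcases eq_or_ne (x - K.starProjection x) 0 with hz | hz
    · have hneg := re_mul_inner_neg_of_mem_halfPlaneSubspace_orthogonal
        (htilt x hx t₀ ht₀ le_rfl) (by rwa [← sub_eq_zero.1 hz])
      rw [← sub_eq_zero.1 hz, hzero] at hneg
      simp at hneg
    · have hneg := re_mul_inner_neg_of_mem_halfPlaneSubspace_orthogonal
        (K.sub_starProjection_mem_orthogonal x) hz
      rw [← hdecomp x hx, hzero] at hneg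
      simp at hneg

lemma exists_isSeparating_of_rank_lt [IsStarNormal B] {k : ℕ}
    (h : ∀ t > 0, Module.rank ℂ (sectorSubspace B v (t * ε)) < k) :
    ∃ M : Submodule ℂ H, FiniteDimensional ℂ M ∧ Module.finrank ℂ M < k ∧ IsSeparating B v M := by
  obtain ⟨t₀, ht₀, hconst⟩ :=
    exists_forall_le_eq_of_antitoneOn (antitoneOn_sectorSubspace (B := B) v ε) h
  exact ⟨_, finiteDimensional_of_rank_lt (h t₀ ht₀), finrank_lt_of_rank_lt (h t₀ ht₀),
    .of_sectorSubspace_eq ht₀ hconst⟩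

end Sectors

section DiagonalBases

open Submodule

variable {E : Type*} [NormedAddCommGroup E] [InnerProductSpace ℂ E] {B : E →L[ℂ] E}
  {s t : Finset E} {U W V : Submodule ℂ E} {x w : E}

/-- `s` is a basis of `U`, not necessarily orthogonal, in which `⟪x, B y⟫` is diagonal. -/
structure IsDiagBasis (B : E →L[ℂ] E) (s : Finset E) (U : Submodule ℂ E) : Prop where
  linearIndepOn : LinearIndepOn ℂ id (s : Set E)
  span_eq : span ℂ (s : Set E) = U
  pairwise : (s : Set E).Pairwise fun x y => ⟪x, B y⟫_ℂ = 0

lemma IsDiagBasis.mem (h : IsDiagBasis B s U) (hx : x ∈ s) : x ∈ U :=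
  h.span_eq ▸ subset_span hx

lemma IsDiagBasis.sup [DecidableEq E] (hs : IsDiagBasis B s U) (ht : IsDiagBasis B t W)
    (hd : Disjoint U W) (ho : FormOrthogonal B U W) : IsDiagBasis B (s ∪ t) (U ⊔ W) where
  linearIndepOn := by
    rw [Finset.coe_union]
    exact hs.linearIndepOn.id_union ht.linearIndepOn (by rwa [hs.span_eq, ht.span_eq])
  span_eq := by rw [Finset.coe_union, span_union, hs.span_eq, ht.span_eq]
  pairwise := by
    rw [Finset.coe_union, Set.pairwise_union]
    exact ⟨hs.pairwise, ht.pairwise, fun x hx y hy _ => ho x (hs.mem hx) y (ht.mem hy)⟩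

lemma isDiagBasis_singleton (B : E →L[ℂ] E) (hx : x ≠ 0) : IsDiagBasis B {x} (ℂ ∙ x) where
  linearIndepOn := by simpa using LinearIndepOn.singleton (R := ℂ) (v := id) hx
  span_eq := by rw [Finset.coe_singleton]
  pairwise := by simp

lemma span_singleton_sup_inf_orthogonal (hx : x ∈ W) (hwx : ⟪w, x⟫_ℂ ≠ 0) :
    (ℂ ∙ x) ⊔ W ⊓ (ℂ ∙ w)ᗮ = W := by
  refine le_antisymm (sup_le ((span_singleton_le_iff_mem x W).2 hx) inf_le_left) fun y hy => ?_
  have hcx : (⟪w, y⟫_ℂ / ⟪w, x⟫_ℂ) • x ∈ ℂ ∙ x := smul_mem _ _ (mem_span_singleton_self x)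
  rw [← add_sub_cancel ((⟪w, y⟫_ℂ / ⟪w, x⟫_ℂ) • x) y]
  refine add_mem_sup hcx ⟨W.sub_mem hy (W.smul_mem _ hx), ?_⟩
  rw [SetLike.mem_coe, mem_orthogonal_singleton_iff_inner_right, inner_sub_right,
    inner_smul_right, div_mul_cancel₀ _ hwx, sub_self]

lemma disjoint_span_singleton_orthogonal (hwx : ⟪w, x⟫_ℂ ≠ 0) : Disjoint (ℂ ∙ x) (ℂ ∙ w)ᗮ :=
  (disjoint_span_singleton' fun hx => hwx (by rw [hx, inner_zero_right])).2
    (fun h => hwx (mem_orthogonal_singleton_iff_inner_right.1 h)) |>.symm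

lemma exists_isDiagBasis_of_forall_splits [FiniteDimensional ℂ U]
    (h : ∀ W ≤ U, W ≠ ⊥ → ∃ x ∈ W, ∃ w, ⟪w, x⟫_ℂ ≠ 0 ∧
      FormOrthogonal B (ℂ ∙ x) (W ⊓ (ℂ ∙ w)ᗮ)) : ∃ s, IsDiagBasis B s U := by
  classical
  induction hn : Module.finrank ℂ U using Nat.strong_induction_on generalizing U with
  | _ n ih =>
  rcases eq_or_ne U ⊥ with rfl | hU
  · exact ⟨∅, by simp, by simp, by simp⟩
  obtain ⟨x, hx, w, hwx, ho⟩ := h U le_rfl hU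
  have hx0 : x ≠ 0 := fun h => hwx (by rw [h, inner_zero_right])
  have hlt : Module.finrank ℂ (U ⊓ (ℂ ∙ w)ᗮ : Submodule ℂ E) < n := hn ▸
    finrank_lt_finrank_of_lt (SetLike.lt_iff_le_and_exists.2 ⟨inf_le_left, x, hx, fun hx' =>
      hwx (mem_orthogonal_singleton_iff_inner_right.1 hx'.2)⟩)
  have := finiteDimensional_of_le (inf_le_left : U ⊓ (ℂ ∙ w)ᗮ ≤ U)
  obtain ⟨s, hs⟩ := ih _ hlt (fun W hW => h W (hW.trans inf_le_left)) rfl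
  have hdisj := (disjoint_span_singleton_orthogonal hwx).mono_right
    (inf_le_right : U ⊓ (ℂ ∙ w)ᗮ ≤ _)
  exact ⟨{x} ∪ s, span_singleton_sup_inf_orthogonal hx hwx ▸
    (isDiagBasis_singleton B hx0).sup hs hdisj ho⟩

lemma formOrthogonal_self_of_inner_self_eq_zero (h : ∀ x ∈ U, ⟪x, B x⟫_ℂ = 0) :
    FormOrthogonal B U U := by
  have hzero : ∀ x ∈ U, ∀ y ∈ U, ⟪x, B y⟫_ℂ = 0 := by
    intro x hx y hy
    have hself : ∀ z ∈ U, ⟪B z, z⟫_ℂ = 0 := fun z hz => inner_eq_zero_symm.1 (h z hz)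
    have hIy := U.smul_mem I hy
    refine inner_eq_zero_symm.1 ((inner_map_polarization (B : E →ₗ[ℂ] E) x y).trans ?_)
    simp only [ContinuousLinearMap.coe_coe, hself _ (U.add_mem hx hy), hself _ (U.sub_mem hx hy),
      hself _ (U.add_mem hx hIy), hself _ (U.sub_mem hx hIy)]
    simp
  exact fun x hx y hy => ⟨hzero x hx y hy, hzero y hy x hx⟩

lemma formOrthogonal_span_singleton (h : ∀ y ∈ W, ⟪x, B y⟫_ℂ = 0 ∧ ⟪y, B x⟫_ℂ = 0) :
    FormOrthogonal B (ℂ ∙ x) W := by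
  intro z hz y hy
  obtain ⟨c, rfl⟩ := mem_span_singleton.1 hz
  obtain ⟨hxy, hyx⟩ := h y hy
  simp only [map_smul, inner_smul_left, inner_smul_right, hxy, hyx, mul_zero, and_self]

lemma exists_isDiagBasis_of_inner_self_eq_zero [FiniteDimensional ℂ U]
    (h : ∀ x ∈ U, ⟪x, B x⟫_ℂ = 0) : ∃ s, IsDiagBasis B s U := by
  refine exists_isDiagBasis_of_forall_splits fun W hWU hW => ?_
  obtain ⟨x, hx, hx0⟩ := exists_mem_ne_zero_of_ne_bot hW
  exact ⟨x, hx, x, inner_self_ne_zero.2 hx0, (formOrthogonal_self_of_inner_self_eq_zero h).mono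
    ((span_singleton_le_iff_mem x U).2 (hWU hx)) (inf_le_left.trans hWU)⟩

lemma exists_forall_inner_eq_mul_inner (B T : E →L[ℂ] E) [FiniteDimensional ℂ U] (hU : U ≠ ⊥)
    (hT : ∀ x ∈ U, x ≠ 0 → ⟪x, T x⟫_ℂ ≠ 0) :
    ∃ x ∈ U, x ≠ 0 ∧ ∃ t : ℂ, ∀ y ∈ U, ⟪y, B x⟫_ℂ = t * ⟪y, T x⟫_ℂ := by
  have := nontrivial_iff_ne_bot.2 hU
  let compr (S : E →L[ℂ] E) : U →ₗ[ℂ] U :=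
    (U.orthogonalProjectionOnto : E →ₗ[ℂ] U) ∘ₗ (S : E →ₗ[ℂ] E) ∘ₗ U.subtype
  have hcompr : ∀ S (x y : U), ⟪(y : E), (compr S x : E)⟫_ℂ = ⟪(y : E), S x⟫_ℂ := by
    intro S x y
    change ⟪(y : E), U.starProjection (S x)⟫_ℂ = _
    rw [← inner_starProjection_left_eq_right, starProjection_eq_self_iff.2 y.2]
  have hinj : Function.Injective (compr T) := by
    rw [injective_iff_map_eq_zero]
    intro x hx
    by_contra hx0
    refine hT x x.2 (by simpa using hx0) ?_
    rw [← hcompr, hx, coe_zero, inner_zero_right]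
  let e := LinearEquiv.ofInjectiveEndo (compr T) hinj
  obtain ⟨t, ht⟩ := Module.End.exists_eigenvalue (e.symm.toLinearMap ∘ₗ compr B : Module.End ℂ U)
  obtain ⟨x, hx⟩ := ht.exists_hasEigenvector
  refine ⟨x, x.2, by simpa using hx.2, t, fun y hy => ?_⟩
  have heig : compr B x = t • compr T x := by
    have happ : e.symm (compr B x) = t • x := hx.apply_eq_smul
    rw [LinearEquiv.symm_apply_eq, map_smul] at happ
    exact happ
  rw [← hcompr B x ⟨y, hy⟩, heig, Submodule.coe_smul, inner_smul_right, hcompr T x ⟨y, hy⟩]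

lemma inf_sup_inf_orthogonal_eq_of_starProjection_mem {K : Submodule ℂ E}
    [K.HasOrthogonalProjection] (h : ∀ x ∈ U, K.starProjection x ∈ U) : U ⊓ K ⊔ U ⊓ Kᗮ = U := by
  refine le_antisymm (sup_le inf_le_left inf_le_left) fun x hx => ?_
  rw [← add_sub_cancel (K.starProjection x) x]
  exact add_mem_sup ⟨h x hx, K.starProjection_apply_mem x⟩
    ⟨U.sub_mem hx (h x hx), K.sub_starProjection_mem_orthogonal x⟩

lemma exists_isDiagBasis_forall_mem_or_mem_orthogonal {ι : Type*} (K : ι → Submodule ℂ E)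
    [∀ i, (K i).HasOrthogonalProjection]
    (hK : ∀ i j, Commute (K i).starProjection (K j).starProjection)
    (hKB : ∀ i, Commute (K i).starProjection B) (D : Finset ι) [FiniteDimensional ℂ U]
    (hU : ∀ i ∈ D, ∀ x ∈ U, (K i).starProjection x ∈ U)
    (hcell : ∀ W ≤ U, (∀ i ∈ D, W ≤ K i ∨ W ≤ (K i)ᗮ) → ∃ s, IsDiagBasis B s W) :
    ∃ s, IsDiagBasis B s U ∧ ∀ x ∈ s, ∀ i ∈ D, x ∈ K i ∨ x ∈ (K i)ᗮ := by
  classical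
  induction D using Finset.induction_on generalizing U with
  | empty => simpa using hcell U le_rfl (by simp)
  | insert i D _ ih =>
    have hiU := hU i (Finset.mem_insert_self i D)
    have hpart : ∀ L : Submodule ℂ E, L = K i ∨ L = (K i)ᗮ →
        ∃ s, IsDiagBasis B s (U ⊓ L) ∧ ∀ x ∈ s, ∀ j ∈ D, x ∈ K j ∨ x ∈ (K j)ᗮ := by
      intro L hL
      have := finiteDimensional_of_le (inf_le_left : U ⊓ L ≤ U)
      refine ih (fun j hj x hx => ⟨hU j (Finset.mem_insert_of_mem hj) x hx.1, ?_⟩)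
        fun W hW hWD => hcell W (hW.trans inf_le_left)
          (Finset.forall_mem_insert _ _ _ |>.2 ⟨?_, hWD⟩)
      · rcases hL with rfl | rfl
        · exact map_mem_of_commute (hK i j) hx.2
        · exact map_mem_orthogonal_of_commute (hK i j) hx.2
      · rcases hL with rfl | rfl
        · exact .inl (hW.trans inf_le_right)
        · exact .inr (hW.trans inf_le_right)
    obtain ⟨s, hs, hsD⟩ := hpart _ (.inl rfl)
    obtain ⟨t, ht, htD⟩ := hpart _ (.inr rfl)
    refine ⟨s ∪ t, inf_sup_inf_orthogonal_eq_of_starProjection_mem hiU ▸ hs.sup ht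
      ((K i).orthogonal_disjoint.mono inf_le_right inf_le_right)
      ((formOrthogonal_orthogonal_of_commute (hKB i)).mono inf_le_right inf_le_right), ?_⟩
    intro x hx
    refine Finset.forall_mem_insert _ _ _ |>.2 ?_
    rcases Finset.mem_union.1 hx with hx | hx
    · exact ⟨.inl (hs.mem hx).2, hsD x hx⟩
    · exact ⟨.inr (ht.mem hx).2, htD x hx⟩

lemma exists_le_forall_starProjection_mem {ι : Type*} (K : ι → Submodule ℂ E)
    [∀ i, (K i).HasOrthogonalProjection]
    (hK : ∀ i j, Commute (K i).starProjection (K j).starProjection) (D : Finset ι)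
    (U : Submodule ℂ E) [FiniteDimensional ℂ U] :
    ∃ U' : Submodule ℂ E, U ≤ U' ∧ FiniteDimensional ℂ U' ∧
      ∀ i ∈ D, ∀ x ∈ U', (K i).starProjection x ∈ U' := by
  classical
  induction D using Finset.induction_on with
  | empty => exact ⟨U, le_rfl, inferInstance, by simp⟩
  | insert i D _ ih =>
    obtain ⟨U', hUU', hfd, hU'⟩ := ih
    refine ⟨U' ⊔ U'.map ((K i).starProjection : E →ₗ[ℂ] E), hUU'.trans le_sup_left,
      inferInstance, fun j hj x hx => ?_⟩
    obtain ⟨a, ha, _, ⟨b, hb, rfl⟩, rfl⟩ := mem_sup.1 hx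
    rw [map_add]
    rcases Finset.mem_insert.1 hj with rfl | hj
    · exact mem_sup_right (add_mem ⟨a, ha, rfl⟩
        ⟨b, hb, (starProjection_eq_self_iff.2 ((K j).starProjection_apply_mem b)).symm⟩)
    · exact add_mem_sup (hU' j hj a ha) ⟨(K j).starProjection b, hU' j hj b hb,
        congrArg (fun T : E →L[ℂ] E => T b) (hK i j).eq⟩

open Classical in
lemma IsDiagBasis.finrank_le_card_filter (hs : IsDiagBasis B s U) {K L : Submodule ℂ E}
    [K.HasOrthogonalProjection] [L.HasOrthogonalProjection] (hK : ∀ x ∈ s, x ∈ K ∨ x ∈ Kᗮ)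
    (hL : ∀ x ∈ s, x ∈ L ∨ x ∈ Lᗮ) (hVU : V ≤ U) (hV : V ≤ K ⊓ L) :
    Module.finrank ℂ V ≤ (s.filter fun x => x ∈ K ∧ x ∈ L).card := by
  have hle : V ≤ span ℂ ((s.filter fun x => x ∈ K ∧ x ∈ L : Finset E) : Set E) := by
    intro x hx
    have hmem : L.starProjection (K.starProjection x) ∈
        (span ℂ (s : Set E)).map ((L.starProjection ∘L K.starProjection : E →L[ℂ] E) : E →ₗ[ℂ] E) :=
      ⟨x, hs.span_eq ▸ hVU hx, rfl⟩
    rw [starProjection_eq_self_iff.2 (hV hx).1, starProjection_eq_self_iff.2 (hV hx).2,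
      map_span] at hmem
    refine span_le.2 ?_ hmem
    rintro _ ⟨y, hy, rfl⟩
    change L.starProjection (K.starProjection y) ∈ _
    rcases hK y hy with hyK | hyK
    · rw [starProjection_eq_self_iff.2 hyK]
      rcases hL y hy with hyL | hyL
      · rw [starProjection_eq_self_iff.2 hyL]
        exact subset_span (Finset.mem_filter.2 ⟨hy, hyK, hyL⟩)
      · rw [(starProjection_apply_eq_zero_iff L).2 hyL]
        exact zero_mem _
    · rw [(starProjection_apply_eq_zero_iff K).2 hyK, map_zero]
      exact zero_mem _
  exact (finrank_mono hle).trans (finrank_span_finset_le_card _)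

end DiagonalBases

section DiagonalBasesOfNormal

variable {B : H →L[ℂ] H} {U : Submodule ℂ H}

lemma exists_isDiagBasis_of_re_mul_inner_neg [FiniteDimensional ℂ U] {d : ℂ}
    (h : ∀ x ∈ U, x ≠ 0 → (d * ⟪x, B x⟫_ℂ).re < 0) : ∃ s, IsDiagBasis B s U := by
  set T := reOp (d • B)
  refine exists_isDiagBasis_of_forall_splits fun W hWU hW => ?_
  have := Submodule.finiteDimensional_of_le hWU
  have hT : ∀ x ∈ W, x ≠ 0 → ⟪x, T x⟫_ℂ ≠ 0 := fun x hx hx0 hzero =>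
    (h x (hWU hx) hx0).ne (by rw [re_mul_inner_eq, hzero, zero_re])
  obtain ⟨x, hx, hx0, t, ht⟩ := exists_forall_inner_eq_mul_inner B T hW hT
  have hd : d ≠ 0 := by
    rintro rfl
    simpa using h x (hWU hx) hx0
  refine ⟨x, hx, T x, fun hTx => hT x hx hx0 (inner_eq_zero_symm.1 hTx),
    formOrthogonal_span_singleton fun y hy => ?_⟩
  have hyTx : ⟪y, T x⟫_ℂ = 0 :=
    inner_eq_zero_symm.1 (Submodule.mem_orthogonal_singleton_iff_inner_right.1 hy.2)
  have hyBx : ⟪y, B x⟫_ℂ = 0 := by rw [ht y hy.1, hyTx, mul_zero]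
  refine ⟨inner_eq_zero_symm.1 ?_, hyBx⟩
  simpa [T, inner_reOp, inner_smul_right, hyBx, hd] using hyTx

lemma inner_self_eq_zero_of_mem_halfPlaneSubspace {x : H}
    (h : ∀ d ∈ ({1, -1, I, -I} : Finset ℂ), x ∈ halfPlaneSubspace B d) : ⟪x, B x⟫_ℂ = 0 := by
  have hre := fun d hd => re_mul_inner_nonneg_of_mem_halfPlaneSubspace (h d hd)
  have h1 := hre 1 (by simp)
  have h2 := hre (-1) (by simp)
  have h3 := hre I (by simp)
  have h4 := hre (-I) (by simp)
  simp only [one_mul, neg_mul, neg_re, I_mul_re, neg_neg] at h1 h2 h3 h4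
  exact Complex.ext (le_antisymm (neg_nonneg.1 h2) h1) (le_antisymm (neg_nonneg.1 h3) h4)

lemma exists_isDiagBasis_halfPlaneSubspace [IsStarNormal B] [FiniteDimensional ℂ U] {D : Finset ℂ}
    (hD : {1, -1, I, -I} ⊆ D)
    (hU : ∀ d ∈ D, ∀ x ∈ U, (halfPlaneSubspace B d).starProjection x ∈ U) :
    ∃ s, IsDiagBasis B s U ∧
      ∀ x ∈ s, ∀ d ∈ D, x ∈ halfPlaneSubspace B d ∨ x ∈ (halfPlaneSubspace B d)ᗮ := by
  refine exists_isDiagBasis_forall_mem_or_mem_orthogonal (halfPlaneSubspace B)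
    commute_halfPlaneSubspace_halfPlaneSubspace commute_halfPlaneSubspace_self D hU
    fun W hWU hW => ?_
  have := Submodule.finiteDimensional_of_le hWU
  by_cases hneg : ∃ d ∈ D, W ≤ (halfPlaneSubspace B d)ᗮ
  · obtain ⟨d, -, hd⟩ := hneg
    exact exists_isDiagBasis_of_re_mul_inner_neg fun x hx =>
      re_mul_inner_neg_of_mem_halfPlaneSubspace_orthogonal (hd hx)
  · push Not at hneg
    exact exists_isDiagBasis_of_inner_self_eq_zero fun x hx =>
      inner_self_eq_zero_of_mem_halfPlaneSubspace fun d hd =>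
        (hW d (hD hd)).resolve_right (hneg d (hD hd)) hx

end DiagonalBasesOfNormal

section LargeSectors

open ComplexConjugate Topology

lemma exists_ofReal_mul_add_ofReal_mul_tilt_eq {v u : ℂ} {δ : ℝ} (hv : v ≠ 0) (hδ : 0 < δ)
    (him : |(u / v).im| < δ * (u / v).re) :
    ∃ ε, |ε| = δ ∧ ∃ a b : ℝ, 0 ≤ a ∧ 0 ≤ b ∧ a * v + b * tilt v ε = u := by
  set c := u / v
  have hu : u = v * c := (mul_div_cancel₀ u hv).symm
  have hb : |c.im| / δ ≤ c.re := by rw [div_le_iff₀ hδ]; linarith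
  obtain ⟨ε, hε, him_eq⟩ : ∃ ε, |ε| = δ ∧ c.im = -(|c.im| / δ * ε) := by
    rcases le_total c.im 0 with h | h
    · exact ⟨δ, abs_of_pos hδ, by rw [abs_of_nonpos h]; field_simp⟩
    · exact ⟨-δ, by rw [abs_neg, abs_of_pos hδ], by rw [abs_of_nonneg h]; field_simp⟩
  refine ⟨ε, hε, c.re - |c.im| / δ, |c.im| / δ, sub_nonneg.2 hb, by positivity, ?_⟩
  have hc : c = c.re - ((|c.im| / δ * ε : ℝ) : ℂ) * I := by
    rw [sub_eq_add_neg, ← neg_mul, ← ofReal_neg, ← him_eq, re_add_im]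
  conv_rhs => rw [hu, hc]
  rw [tilt]
  push_cast
  ring

lemma exists_finset_sectors_cover {δ : Circle → ℝ} (hδ : ∀ v, 0 < δ v) :
    ∃ T : Finset (Circle × ℝ), (∀ p ∈ T, |p.2| = δ p.1) ∧ ∀ u : ℂ,
      ∃ p ∈ T, ∃ a b : ℝ, 0 ≤ a ∧ 0 ≤ b ∧ a * (p.1 : ℂ) + b * tilt p.1 p.2 = u := by
  classical
  let N (v : Circle) : Set Circle :=
    {u | |((u : ℂ) / v).im| < δ v * ((u : ℂ) / v).re}
  have hN : ∀ v, N v ∈ 𝓝 v := by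
    intro v
    have hcont : Continuous fun u : Circle => (u : ℂ) / v := by fun_prop
    refine (isOpen_lt (continuous_im.comp hcont).abs
      (continuous_const.mul (continuous_re.comp hcont))).mem_nhds ?_
    simp [hδ v]
  obtain ⟨F, -, hF⟩ := isCompact_univ.elim_nhds_subcover N fun v _ => hN v
  refine ⟨F.biUnion fun v => {(v, δ v), (v, -δ v)}, ?_, fun u => ?_⟩
  · intro p hp
    obtain ⟨v, -, hp⟩ := Finset.mem_biUnion.1 hp
    rcases Finset.mem_insert.1 hp with rfl | hp
    · exact abs_of_pos (hδ v)
    · rw [Finset.mem_singleton.1 hp, abs_neg, abs_of_pos (hδ v)]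
  · have hu : (‖u‖ : ℂ) * (Circle.exp u.arg : ℂ) = u := by
      rw [Circle.coe_exp, norm_mul_exp_arg_mul_I]
    obtain ⟨v, hvF, him⟩ := Set.mem_iUnion₂.1 (hF (Set.mem_univ (Circle.exp u.arg)))
    obtain ⟨ε, hε, a, b, ha, hb, hab⟩ :=
      exists_ofReal_mul_add_ofReal_mul_tilt_eq v.coe_ne_zero (hδ v) him
    refine ⟨(v, ε), Finset.mem_biUnion.2 ⟨v, hvF, ?_⟩, ‖u‖ * a, ‖u‖ * b, by positivity,
      by positivity, ?_⟩
    · rcases eq_or_eq_neg_of_abs_eq hε with rfl | rfl <;> simp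
    · rw [ofReal_mul, ofReal_mul, mul_assoc, mul_assoc, ← mul_add, hab, hu]

/-- Some `k`-dimensional subspace is isotropic for the form `⟪x, B y⟫`, that is,
`0 ∈ Λ_k(B)`. -/
def HasIsotropicSubspace {E : Type*} [NormedAddCommGroup E] [InnerProductSpace ℂ E]
    (B : E →L[ℂ] E) (k : ℕ) : Prop :=
  ∃ V : Submodule ℂ E, FiniteDimensional ℂ V ∧ Module.finrank ℂ V = k ∧
    ∀ x ∈ V, ∀ y ∈ V, ⟪x, B y⟫_ℂ = 0

lemma IsDiagBasis.hasIsotropicSubspace {E : Type*} [NormedAddCommGroup E] [InnerProductSpace ℂ E]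
    {B : E →L[ℂ] E} {s : Finset E} {U : Submodule ℂ E} (hs : IsDiagBasis B s U) {k : ℕ}
    (h : HasDiagIsotropic (fun x : s => ⟪(x : E), B x⟫_ℂ) k) : HasIsotropicSubspace B k := by
  obtain ⟨V, hk, hV⟩ := h
  have hli : LinearIndependent ℂ (Subtype.val : s → E) := hs.linearIndepOn
  let f : (s → ℂ) →ₗ[ℂ] E := Fintype.linearCombination ℂ Subtype.val
  have hf : Function.Injective f := hli.fintypeLinearCombination_injective
  have hdiag : ∀ x y : s → ℂ,
      ⟪f x, B (f y)⟫_ℂ = ∑ i : s, ⟪(i : E), B i⟫_ℂ * (conj (x i) * y i) := by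
    intro x y
    simp only [f, Fintype.linearCombination_apply, map_sum, map_smul, sum_inner, inner_sum,
      inner_smul_left, inner_smul_right]
    refine Finset.sum_congr rfl fun i _ => ?_
    rw [Finset.sum_eq_single i]
    · ring
    · intro j _ hji
      rw [hs.pairwise j.2 i.2 (Subtype.coe_ne_coe.2 hji), mul_zero]
    · simp
  obtain ⟨W, hWV, hfd, hW⟩ := exists_le_finrank_eq (U := V.map f) (k := k) (by
    rw [← Module.finrank_eq_rank, ← (Submodule.equivMapOfInjective f hf V).finrank_eq]
    exact_mod_cast hk)
  refine ⟨W, hfd, hW, fun x hx y hy => ?_⟩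
  obtain ⟨x, hxV, rfl⟩ := hWV hx
  obtain ⟨y, hyV, rfl⟩ := hWV hy
  rw [hdiag, hV x hxV y hyV]

lemma exists_pos_le_rank_sectorSubspace {B : H →L[ℂ] H} [IsStarNormal B] {v : ℂ} {k : ℕ}
    (h : ∀ ε, ∃ t > 0, k ≤ Module.rank ℂ (sectorSubspace B v (t * ε))) :
    ∃ δ > 0, ∀ ε, |ε| = δ → k ≤ Module.rank ℂ (sectorSubspace B v ε) := by
  obtain ⟨s, hs, hsk⟩ := h 1
  obtain ⟨t, ht, htk⟩ := h (-1)
  refine ⟨min s t, lt_min hs ht, fun ε hε => ?_⟩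
  rcases eq_or_eq_neg_of_abs_eq hε with rfl | rfl
  · rw [← mul_one (min s t)]
    exact hsk.trans (Submodule.rank_mono
      (antitoneOn_sectorSubspace v 1 (lt_min hs ht) hs (min_le_left s t)))
  · rw [← mul_neg_one]
    exact htk.trans (Submodule.rank_mono
      (antitoneOn_sectorSubspace v (-1) (lt_min hs ht) ht (min_le_right s t)))

lemma exists_finiteDimensional_forall_le {K E ι : Type*} [DivisionRing K] [AddCommGroup E]
    [Module K E] (T : Finset ι) {U : ι → Submodule K E} {k : ℕ}
    (h : ∀ p ∈ T, k ≤ Module.rank K (U p)) :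
    ∃ V : Submodule K E, FiniteDimensional K V ∧
      ∀ p ∈ T, ∃ W ≤ V ⊓ U p, Module.finrank K W = k := by
  choose! W hWU hfd hW using fun p hp => exists_le_finrank_eq (h p hp)
  have : ∀ p : T, FiniteDimensional K (W p) := fun p => hfd p p.2
  exact ⟨⨆ p : T, W p, inferInstance, fun p hp =>
    ⟨W p, le_inf (le_iSup (fun p : T => W p) ⟨p, hp⟩) (hWU p hp), hW p hp⟩⟩

open Classical in
lemma IsDiagBasis.card_filter_halfPlane_le {B : H →L[ℂ] H} [IsStarNormal B] {s : Finset H}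
    {U W : Submodule ℂ H} (hs : IsDiagBasis B s U) {v : ℂ} {ε a b : ℝ} (ha : 0 ≤ a) (hb : 0 ≤ b)
    (hsv : ∀ d ∈ ({v, tilt v ε} : Set ℂ), ∀ x ∈ s,
      x ∈ halfPlaneSubspace B d ∨ x ∈ (halfPlaneSubspace B d)ᗮ)
    (hW : W ≤ U ⊓ sectorSubspace B v ε) :
    Module.finrank ℂ W ≤ (Finset.univ.filter fun x : s =>
      0 ≤ ((a * v + b * tilt v ε) * ⟪(x : H), B x⟫_ℂ).re).card := by
  refine (hs.finrank_le_card_filter (hsv v (by simp)) (hsv (tilt v ε) (by simp))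
    (hW.trans inf_le_left) (hW.trans inf_le_right)).trans ?_
  rw [← Finset.card_map (Function.Embedding.subtype _)]
  refine Finset.card_le_card fun x hx => ?_
  obtain ⟨hxs, hx⟩ := Finset.mem_filter.1 hx
  exact Finset.mem_map.2 ⟨⟨x, hxs⟩, Finset.mem_filter.2 ⟨Finset.mem_univ _,
    re_mul_inner_nonneg_of_mem_halfPlaneSubspace (halfPlaneSubspace_inf_le ha hb hx)⟩, rfl⟩

lemma hasIsotropicSubspace_of_le_rank_sectorSubspace {B : H →L[ℂ] H} [IsStarNormal B] {k : ℕ}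
    (h : ∀ (v : Circle) (ε : ℝ), ∃ t > 0, k ≤ Module.rank ℂ (sectorSubspace B v (t * ε))) :
    HasIsotropicSubspace B k := by
  classical
  choose δ hδ hδk using fun v => exists_pos_le_rank_sectorSubspace (h v)
  obtain ⟨T, hTδ, hT⟩ := exists_finset_sectors_cover hδ
  obtain ⟨U₀, hU₀, hW⟩ := exists_finiteDimensional_forall_le T
    (U := fun p => sectorSubspace B p.1 p.2) fun p hp => hδk p.1 p.2 (hTδ p hp)
  set D : Finset ℂ := T.biUnion (fun p => {(p.1 : ℂ), tilt p.1 p.2}) ∪ {1, -1, I, -I}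
  obtain ⟨U, hU₀U, _, hU⟩ := exists_le_forall_starProjection_mem (halfPlaneSubspace B)
    commute_halfPlaneSubspace_halfPlaneSubspace D U₀
  obtain ⟨s, hs, hsD⟩ := exists_isDiagBasis_halfPlaneSubspace Finset.subset_union_right hU
  refine hs.hasIsotropicSubspace (HasDiagIsotropic.of_card_halfPlane fun u _ => ?_)
  obtain ⟨p, hp, a, b, ha, hb, rfl⟩ := hT u
  obtain ⟨W, hWU, rfl⟩ := hW p hp
  refine hs.card_filter_halfPlane_le ha hb (fun d hd x hx => hsD x hx d ?_)
    (hWU.trans (inf_le_inf_right _ hU₀U))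
  exact Finset.mem_union_left _ (Finset.mem_biUnion.2 ⟨p, hp, by simpa using hd⟩)

lemma exists_isSeparating_of_not_hasIsotropicSubspace {B : H →L[ℂ] H} [IsStarNormal B] {k : ℕ}
    (h : ¬ HasIsotropicSubspace B k) : ∃ (v : Circle) (M : Submodule ℂ H),
      FiniteDimensional ℂ M ∧ Module.finrank ℂ M < k ∧ IsSeparating B v M := by
  contrapose! h
  refine hasIsotropicSubspace_of_le_rank_sectorSubspace fun v ε => ?_
  by_contra! hlt
  obtain ⟨M, hfd, hM, hsep⟩ := exists_isSeparating_of_rank_lt hlt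
  exact h v M hfd hM hsep

end LargeSectors

section Perturbation

variable {E : Type*} [NormedAddCommGroup E] [InnerProductSpace ℂ E]

lemma isOrthProj_starProjection (V : Submodule ℂ H) [V.HasOrthogonalProjection] :
    IsOrthProj V.starProjection :=
  ⟨isSelfAdjoint_starProjection V, V.isIdempotentElem_starProjection⟩

lemma opRank_starProjection (V : Submodule ℂ E) [FiniteDimensional ℂ V] :
    opRank V.starProjection = (Module.finrank ℂ V : Cardinal) := by
  rw [opRank, Submodule.range_starProjection, Module.finrank_eq_rank]

lemma mem_rankKRange_iff {k : ℕ} {A : H →L[ℂ] H} {lam : ℂ} :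
    lam ∈ rankKRange k A ↔ HasIsotropicSubspace (A - lam • (1 : H →L[ℂ] H)) k := by
  constructor
  · rintro ⟨P, ⟨hP_adj, hP_idem⟩, hP_rank, hPA⟩
    refine ⟨LinearMap.range (P : H →ₗ[ℂ] H), Module.finite_of_rank_eq_nat hP_rank,
      Module.finrank_eq_of_rank_eq hP_rank, ?_⟩
    rintro _ ⟨x, rfl⟩ _ ⟨y, rfl⟩
    have hPP : P (P y) = P y := congrArg (fun f : H →L[ℂ] H => f y) hP_idem
    have hPAP : P (A (P y)) = lam • P y := congrArg (fun f : H →L[ℂ] H => f y) hPA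
    calc ⟪P x, A (P y) - lam • P y⟫_ℂ = ⟪x, P (A (P y) - lam • P y)⟫_ℂ := hP_adj.isSymmetric _ _
      _ = 0 := by rw [map_sub, map_smul, hPP, hPAP, sub_self, inner_zero_right]
  · rintro ⟨V, _, hVk, hV⟩
    refine ⟨V.starProjection, isOrthProj_starProjection V, by rw [opRank_starProjection, hVk], ?_⟩
    ext x
    refine ext_inner_left ℂ fun y => ?_
    have hAV : ⟪V.starProjection y, A (V.starProjection x) - lam • V.starProjection x⟫_ℂ = 0 :=
      hV _ (V.starProjection_apply_mem y) _ (V.starProjection_apply_mem x)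
    rw [Submodule.inner_starProjection_left_eq_right, map_sub, map_smul,
      Submodule.starProjection_eq_self_iff.2 (V.starProjection_apply_mem x), inner_sub_right,
      sub_eq_zero] at hAV
    exact hAV

lemma HasIsotropicSubspace.add_of_opRank_le {B F : E →L[ℂ] E} {k r : ℕ}
    (h : HasIsotropicSubspace B k) (hF : opRank F ≤ r) : HasIsotropicSubspace (B + F) (k - r) := by
  obtain ⟨V, _, rfl, hV⟩ := h
  let f : V →ₗ[ℂ] E := (F : E →ₗ[ℂ] E) ∘ₗ V.subtype
  have hrange : Module.finrank ℂ (LinearMap.range f) ≤ r := by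
    have hrank : Module.rank ℂ (LinearMap.range f) ≤ r :=
      (Submodule.rank_mono (LinearMap.range_comp_le_range _ _)).trans hF
    rwa [← Module.finrank_eq_rank, Nat.cast_le] at hrank
  have hker : Module.finrank ℂ V - r ≤ Module.finrank ℂ ((LinearMap.ker f).map V.subtype) := by
    rw [← (Submodule.equivMapOfInjective V.subtype V.injective_subtype _).finrank_eq,
      ← LinearMap.finrank_range_add_finrank_ker f]
    omega
  obtain ⟨W, hWV, hfd, hW⟩ := exists_le_finrank_eq (k := Module.finrank ℂ V - r)
    (U := (LinearMap.ker f).map V.subtype) (by rw [← Module.finrank_eq_rank]; exact_mod_cast hker)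
  refine ⟨W, hfd, hW, fun x hx y hy => ?_⟩
  obtain ⟨x, -, rfl⟩ := hWV hx
  obtain ⟨y, hFy, rfl⟩ := hWV hy
  change F y = 0 at hFy
  rw [add_apply, Submodule.subtype_apply, Submodule.subtype_apply, hFy, add_zero]
  exact hV _ x.2 _ y.2

lemma exists_norm_starProjection_le {M : Submodule ℂ E} [FiniteDimensional ℂ M] {k r : ℕ}
    (hM : Module.finrank ℂ M < k) (hrk : r < k) (hk : (k : Cardinal) ≤ Module.rank ℂ E) :
    ∃ (N L : Submodule ℂ E) (_ : FiniteDimensional ℂ N), FiniteDimensional ℂ L ∧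
      Module.finrank ℂ N = r ∧ Module.finrank ℂ L < k - r ∧
      ∀ x ∈ Lᗮ, ‖M.starProjection x‖ ≤ ‖N.starProjection x‖ := by
  rcases le_total (Module.finrank ℂ M) r with hMr | hrM
  · obtain ⟨N, hMN, -, hfd, hN⟩ := exists_le_le_finrank_eq (le_top (a := M)) hMr
      (by rw [rank_top]; exact le_trans (by exact_mod_cast hrk.le) hk)
    refine ⟨N, ⊥, hfd, inferInstance, hN, by rw [finrank_bot]; omega, fun x _ => ?_⟩
    rw [← Submodule.starProjection_comp_starProjection_of_le hMN]
    exact M.norm_starProjection_apply_le _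
  · obtain ⟨N, hNM, hfd, hN⟩ := exists_le_finrank_eq (U := M) (k := r)
      (by rw [← Module.finrank_eq_rank]; exact_mod_cast hrM)
    have hfinrank := Submodule.finrank_add_inf_finrank_orthogonal hNM
    refine ⟨N, Nᗮ ⊓ M, hfd, Submodule.finiteDimensional_of_le inf_le_right, hN, by omega,
      fun x hx => ?_⟩
    have hmem : x - N.starProjection x ∈ Mᗮ := by
      rw [← Submodule.sup_orthogonal_inf_of_hasOrthogonalProjection hNM,
        ← Submodule.inf_orthogonal]
      refine ⟨N.sub_starProjection_mem_orthogonal x, Submodule.sub_mem _ hx ?_⟩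
      exact Submodule.orthogonal_le inf_le_left
        (N.le_orthogonal_orthogonal (N.starProjection_apply_mem x))
    rw [Submodule.eq_starProjection_of_mem_orthogonal (hNM (N.starProjection_apply_mem x)) hmem]

lemma exists_mem_orthogonal_ne_zero {V L : Submodule ℂ E} [FiniteDimensional ℂ V]
    [FiniteDimensional ℂ L] (h : Module.finrank ℂ L < Module.finrank ℂ V) :
    ∃ x ∈ V, x ∈ Lᗮ ∧ x ≠ 0 := by
  let f : V →ₗ[ℂ] L := (L.orthogonalProjectionOnto : E →ₗ[ℂ] L) ∘ₗ V.subtype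
  obtain ⟨x, hx, hx0⟩ :=
    Submodule.exists_mem_ne_zero_of_ne_bot (LinearMap.ker_ne_bot_of_finrank_lt (f := f) h)
  exact ⟨x, x.2, Submodule.orthogonalProjectionOnto_eq_zero_iff.1 hx, by simpa using hx0⟩

lemma inner_starProjection_self (N : Submodule ℂ E) [N.HasOrthogonalProjection] (x : E) :
    ⟪x, N.starProjection x⟫_ℂ = ((‖N.starProjection x‖ ^ 2 : ℝ) : ℂ) := by
  rw [← Submodule.starProjection_eq_self_iff.2 (N.starProjection_apply_mem x),
    ← Submodule.inner_starProjection_left_eq_right,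
    Submodule.starProjection_eq_self_iff.2 (N.starProjection_apply_mem x),
    inner_self_eq_norm_sq_to_K]
  push_cast
  rfl

lemma IsSeparating.not_hasIsotropicSubspace_add {B : E →L[ℂ] E} {v : Circle} {c : ℂ} {C : ℝ}
    {M N L : Submodule ℂ E} [FiniteDimensional ℂ M] [FiniteDimensional ℂ N]
    [FiniteDimensional ℂ L] {j : ℕ} (hsep : IsSeparating B v M) (hC : 0 ≤ C)
    (hB : ∀ x ≠ 0, (v * ⟪x, B x⟫_ℂ).re < C * ‖x‖ ^ 2) (hc : v * c = -C)
    (hL : Module.finrank ℂ L < j)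
    (hMN : ∀ x ∈ Lᗮ, ‖M.starProjection x‖ ≤ ‖N.starProjection x‖) :
    ¬ HasIsotropicSubspace (B + c • N.starProjection) j := by
  rintro ⟨V, _, rfl, hV⟩
  obtain ⟨x, hxV, hxL, hx0⟩ := exists_mem_orthogonal_ne_zero hL
  set m := M.starProjection x
  set y := x - m
  have hy : y ∈ Mᗮ := M.sub_starProjection_mem_orthogonal x
  have hform : v * ⟪x, B x⟫_ℂ = ((C * ‖N.starProjection x‖ ^ 2 : ℝ) : ℂ) := by
    have hzero := hV x hxV x hxV
    rw [add_apply, smul_apply, inner_add_right, inner_smul_right, inner_starProjection_self]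
      at hzero
    push_cast at hzero ⊢
    linear_combination v * hzero - (‖N.starProjection x‖ : ℂ) ^ 2 * hc
  have hsum : (v * ⟪m, B m⟫_ℂ).re + (v * ⟪y, B y⟫_ℂ).re = C * ‖N.starProjection x‖ ^ 2 := by
    rw [← add_re, ← mul_add, ← hsep.formOrthogonal.inner_add_self (M.starProjection_apply_mem x) hy,
      add_sub_cancel, hform, ofReal_re]
  have hle : C * ‖m‖ ^ 2 ≤ C * ‖N.starProjection x‖ ^ 2 := by
    gcongr
    exact hMN x hxL
  rcases eq_or_ne m 0 with hm | hm
  · have hyx : y = x := by rw [← sub_zero x, ← hm]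
    have hre := hsep.re_nonpos y hy
    have hN : C * ‖N.starProjection x‖ ^ 2 = 0 :=
      le_antisymm (by simpa [hm, ← hsum] using hre) (by positivity)
    rw [hN, ofReal_zero, mul_eq_zero, or_iff_right v.coe_ne_zero, ← hyx] at hform
    exact hsep.inner_ne_zero y hy (hyx ▸ hx0) hform
  · linarith [hB m hm, hsep.re_nonpos y hy]

lemma norm_mul_inner_le (A : E →L[ℂ] E) (v : Circle) (x : E) :
    ‖(v : ℂ) * ⟪x, A x⟫_ℂ‖ ≤ ‖A‖ * ‖x‖ ^ 2 := by
  rw [norm_mul, v.norm_coe, one_mul]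
  calc ‖⟪x, A x⟫_ℂ‖ ≤ ‖x‖ * ‖A x‖ := norm_inner_le_norm _ _
    _ ≤ ‖x‖ * (‖A‖ * ‖x‖) := by gcongr; exact A.le_opNorm x
    _ = ‖A‖ * ‖x‖ ^ 2 := by ring

lemma mul_inner_sub_smul_one (A : E →L[ℂ] E) (lam v : ℂ) (x : E) :
    v * ⟪x, (A - lam • (1 : E →L[ℂ] E)) x⟫_ℂ =
      v * ⟪x, A x⟫_ℂ - v * lam * ((‖x‖ ^ 2 : ℝ) : ℂ) := by
  rw [sub_apply, smul_apply, one_apply_eq_self, inner_sub_right, inner_smul_right,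
    inner_self_eq_norm_sq_to_K]
  push_cast
  simp only [coe_algebraMap]
  ring

lemma re_mul_inner_sub_smul_one (A : E →L[ℂ] E) (lam v : ℂ) (x : E) :
    (v * ⟪x, (A - lam • (1 : E →L[ℂ] E)) x⟫_ℂ).re =
      (v * ⟪x, A x⟫_ℂ).re - (v * lam).re * ‖x‖ ^ 2 := by
  rw [mul_inner_sub_smul_one, sub_re, re_mul_ofReal]

lemma re_mul_inner_sub_smul_one_lt {A : E →L[ℂ] E} {lam : ℂ} {v : Circle}
    (h : -‖A‖ < ((v : ℂ) * lam).re) {x : E} (hx : x ≠ 0) :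
    ((v : ℂ) * ⟪x, (A - lam • (1 : E →L[ℂ] E)) x⟫_ℂ).re < 2 * ‖A‖ * ‖x‖ ^ 2 := by
  have hx_pos : 0 < ‖x‖ ^ 2 := by positivity
  rw [re_mul_inner_sub_smul_one]
  linarith [mul_lt_mul_of_pos_right h hx_pos, (re_le_norm _).trans (norm_mul_inner_le A v x)]

lemma eq_neg_ofReal_of_norm_le_of_re_le {w : ℂ} {a : ℝ} (hw : ‖w‖ ≤ a) (hre : w.re ≤ -a) :
    w = -(a : ℂ) := by
  have hle : -w.re ≤ ‖w‖ := by simpa using re_le_norm (-w)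
  have hnonneg := (re_eq_norm (z := -w)).1 (by rw [norm_neg, neg_re]; linarith)
  rw [← neg_eq_iff_eq_neg, eq_coe_norm_of_nonneg hnonneg, norm_neg, ofReal_inj]
  linarith

lemma exists_isSeparating_bot_of_norm_lt {A : E →L[ℂ] E} {lam : ℂ} (h : ‖A‖ < ‖lam‖) :
    ∃ v : Circle, IsSeparating (A - lam • (1 : E →L[ℂ] E)) v ⊥ ∧ -‖A‖ < ((v : ℂ) * lam).re := by
  obtain ⟨v, hv⟩ : ∃ v : Circle, (v : ℂ) * lam = (‖lam‖ : ℝ) := by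
    refine ⟨Circle.exp (-lam.arg), ?_⟩
    conv_lhs => rw [← norm_mul_exp_arg_mul_I lam]
    rw [Circle.coe_exp, mul_left_comm, ← exp_add]
    simp
  have hneg : ∀ x : E, x ≠ 0 → ((v : ℂ) * ⟪x, (A - lam • (1 : E →L[ℂ] E)) x⟫_ℂ).re < 0 := by
    intro x hx
    have hx_pos : 0 < ‖x‖ ^ 2 := by positivity
    rw [re_mul_inner_sub_smul_one, hv, ofReal_re]
    linarith [mul_lt_mul_of_pos_right h hx_pos, (re_le_norm _).trans (norm_mul_inner_le A v x)]
  refine ⟨v, ⟨?_, fun x _ => ?_, fun x _ hx0 hzero => ?_⟩, ?_⟩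
  · rintro x hx y -
    simp [(Submodule.mem_bot ℂ).1 hx]
  · rcases eq_or_ne x 0 with rfl | hx
    · simp
    · exact (hneg x hx).le
  · exact (hneg x hx0).ne (by rw [hzero, mul_zero, zero_re])
  · rw [hv, ofReal_re]
    linarith [norm_nonneg A, norm_nonneg lam]

lemma IsSeparating.neg_norm_lt_re {A : E →L[ℂ] E} {lam : ℂ} {v : Circle} {M : Submodule ℂ E}
    (h : IsSeparating (A - lam • (1 : E →L[ℂ] E)) v M) (hM : Mᗮ ≠ ⊥) (hlam : ‖lam‖ ≤ ‖A‖) :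
    -‖A‖ < ((v : ℂ) * lam).re := by
  by_contra! hre
  have hvlam : (v : ℂ) * lam = -(‖A‖ : ℂ) :=
    eq_neg_ofReal_of_norm_le_of_re_le (by rwa [norm_mul, v.norm_coe, one_mul]) hre
  obtain ⟨x, hxM, hx0⟩ := Submodule.exists_mem_ne_zero_of_ne_bot hM
  have hform := h.re_nonpos x hxM
  rw [re_mul_inner_sub_smul_one, hvlam, neg_re, ofReal_re] at hform
  have hw := eq_neg_ofReal_of_norm_le_of_re_le (norm_mul_inner_le A v x) (by linarith)
  have hzero : (v : ℂ) * ⟪x, (A - lam • (1 : E →L[ℂ] E)) x⟫_ℂ = 0 := by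
    rw [mul_inner_sub_smul_one, hw, hvlam]
    push_cast
    ring
  exact h.inner_ne_zero x hxM hx0 ((mul_eq_zero.1 hzero).resolve_left v.coe_ne_zero)

lemma orthogonal_ne_bot_of_finrank_lt_rank {M : Submodule ℂ E} [FiniteDimensional ℂ M]
    (h : (Module.finrank ℂ M : Cardinal) < Module.rank ℂ E) : Mᗮ ≠ ⊥ := by
  rw [Ne, Submodule.orthogonal_eq_bot_iff]
  rintro rfl
  rw [Module.finrank_eq_rank, rank_top] at h
  exact h.false

lemma isStarNormal_sub_smul_one (A : H →L[ℂ] H) [hA : IsStarNormal A] (lam : ℂ) :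
    IsStarNormal (A - lam • (1 : H →L[ℂ] H)) := by
  refine ⟨?_⟩
  rw [star_sub, star_smul, star_one]
  exact (hA.star_comm_self.sub_left ((Commute.one_left A).smul_left _)).sub_right
    ((Commute.one_right _).smul_right _)

lemma exists_isSeparating_of_notMem_rankKRange {A : H →L[ℂ] H} [IsStarNormal A] {k : ℕ}
    (hk : (k : Cardinal) ≤ Module.rank ℂ H) {lam : ℂ} (h : lam ∉ rankKRange k A) :
    ∃ (v : Circle) (M : Submodule ℂ H), FiniteDimensional ℂ M ∧ Module.finrank ℂ M < k ∧
      IsSeparating (A - lam • (1 : H →L[ℂ] H)) v M ∧ -‖A‖ < ((v : ℂ) * lam).re := by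
  have := isStarNormal_sub_smul_one A lam
  obtain ⟨v, M, hfd, hM, hsep⟩ :=
    exists_isSeparating_of_not_hasIsotropicSubspace (mem_rankKRange_iff.not.1 h)
  rcases lt_or_ge ‖A‖ ‖lam‖ with hlt | hge
  · obtain ⟨w, hw, hre⟩ := exists_isSeparating_bot_of_norm_lt hlt
    exact ⟨w, ⊥, inferInstance, by rw [finrank_bot]; exact Nat.zero_lt_of_lt hM, hw, hre⟩
  · refine ⟨v, M, hfd, hM, hsep, hsep.neg_norm_lt_re
      (orthogonal_ne_bot_of_finrank_lt_rank (lt_of_lt_of_le ?_ hk)) hge⟩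
    exact_mod_cast hM

lemma exists_mem_Ico_exp_eq (v : Circle) :
    ∃ ξ ∈ Set.Ico (0 : ℝ) (2 * Real.pi), Complex.exp (ξ * I) = v := by
  obtain ⟨ξ, hξ, h⟩ := Circle.periodic_exp.exists_mem_Ico₀ Real.two_pi_pos (arg v)
  exact ⟨ξ, hξ, by rw [← Circle.coe_exp, ← h, Circle.exp_arg]⟩

end Perturbation

/-- For a normal operator `A`, `1 ≤ r < k ≤ dim ℋ`, and any collection `𝒮` of
operators of rank at most `r` containing
`𝒮₀ = {2e^{iξ}‖A‖P : P a rank-r orthogonal projection, ξ ∈ [0,2π)}`,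
`Λ_k(A)` is the intersection of the sets `Λ_{k-r}(A+F)` for `F ∈ 𝒮`. -/
theorem rankKRange_eq_iInter_perturbed_normal
    (A : H →L[ℂ] H)
    (hA : ContinuousLinearMap.adjoint A ∘L A = A ∘L ContinuousLinearMap.adjoint A)
    (r k : ℕ) (hr : 1 ≤ r) (hrk : r < k) (hk : (k : Cardinal) ≤ Module.rank ℂ H)
    (S : Set (H →L[ℂ] H))
    (hSrank : ∀ F ∈ S, opRank F ≤ r)
    (hS0 : ∀ ξ ∈ Set.Ico (0 : ℝ) (2 * Real.pi), ∀ P : H →L[ℂ] H,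
      IsOrthProj P → opRank P = r →
      ((2 * Complex.exp (ξ * Complex.I) * (‖A‖ : ℂ)) • P) ∈ S) :
    rankKRange k A = ⋂ F ∈ S, rankKRange (k - r) (A + F) := by
  have : IsStarNormal A := ⟨hA⟩
  refine Set.Subset.antisymm (fun lam hlam => Set.mem_iInter₂.2 fun F hF => ?_) fun lam hlam => ?_
  · rw [mem_rankKRange_iff] at hlam ⊢
    rw [add_sub_right_comm]
    exact hlam.add_of_opRank_le (hSrank F hF)
  · by_contra hnot
    obtain ⟨v, M, _, hM, hsep, hre⟩ := exists_isSeparating_of_notMem_rankKRange hk hnot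
    obtain ⟨N, L, _, _, hN, hL, hMN⟩ := exists_norm_starProjection_le hM hrk hk
    obtain ⟨ξ, hξ, hξv⟩ := exists_mem_Ico_exp_eq (-v⁻¹)
    have hmem := Set.mem_iInter₂.1 hlam _ (hS0 ξ hξ N.starProjection
      (isOrthProj_starProjection N) (by rw [opRank_starProjection, hN]))
    rw [mem_rankKRange_iff, add_sub_right_comm] at hmem
    have hc : (v : ℂ) * (2 * exp (ξ * I) * ‖A‖) = -((2 * ‖A‖ : ℝ) : ℂ) := by
      rw [hξv]
      push_cast
      field_simp
    exact hsep.not_hasIsotropicSubspace_add (by positivity)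
      (fun x => re_mul_inner_sub_smul_one_lt hre) hc hL hMN hmem
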